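/- arXiv:0805.3437 — 2 statements merged into one kernel-verified Lean document; each statement's English description precedes it below -/
import Mathlib

section
/- Let M be a finite-dimensional (α,β)-Yetter-Drinfeld module and let M' be the (αβ⁻¹α,α)-Yetter-Drinfeld module equal to M with coaction m ↦ m₍₀₎ ⊗ αβ⁻¹(m₍₁₎). Then the map τ : End(M)̄ → End(M')^op, defined by τ(u)(m) = u₍₀₎(α⁻¹(u₍₁₎)·m) (where u ↦ u₍₀₎ ⊗ u₍₁₎ is the right H-coaction of End(M)), is an isomorphism of algebras in _H𝒴𝒟^H (an algebra map which is bijective, H-linear and H-colinear), with inverse given by τ⁻¹(v)(m) = v₍₀₎(α⁻¹(S(v₍₁₎))·m). -/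
open TensorProduct

noncomputable section

namespace GYD

variable (k H : Type) [Field k] [Ring H] [HopfAlgebra k H]

/-- `φ` is a Hopf algebra automorphism of `H` (a linear equivalence which is both an
algebra morphism and a coalgebra morphism). -/
def IsHopfAut (φ : H ≃ₗ[k] H) : Prop :=
  (∀ x y : H, φ (x * y) = φ x * φ y) ∧ (φ 1 = 1) ∧
  (∀ h : H, Coalgebra.comul (R := k) (φ h)
      = TensorProduct.map φ.toLinearMap φ.toLinearMap (Coalgebra.comul (R := k) h)) ∧
  (∀ h : H, Coalgebra.counit (R := k) (φ h) = Coalgebra.counit (R := k) h)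

/-- `Sinv` is a two-sided inverse of the antipode of `H`. -/
def IsAntipodeInv (Sinv : H → H) : Prop :=
  (∀ h : H, HopfAlgebra.antipode (R := k) (Sinv h) = h) ∧
  (∀ h : H, Sinv (HopfAlgebra.antipode (R := k) h) = h)

/-- The data `(act, coact)` makes `M` an `(α, β)`-Yetter-Drinfeld module over `H`:
`M` is a left `H`-module, a right `H`-comodule, and the compatibility
`(h·m)₍₀₎ ⊗ (h·m)₍₁₎ = h₂·m₍₀₎ ⊗ β(h₃) m₍₁₎ α(Sinv(h₁))` holds (expressed via
arbitrary finite representations of `(Δ ⊗ id)(Δ h)` and of `coact m`). -/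
def IsYD (Sinv α β : H → H) {M : Type} [AddCommGroup M] [Module k M]
    (act : H →ₗ[k] M →ₗ[k] M) (coact : M →ₗ[k] M ⊗[k] H) : Prop :=
  (∀ m : M, act 1 m = m) ∧
  (∀ (g h : H) (m : M), act (g * h) m = act g (act h m)) ∧
  (∀ m : M, LinearMap.rTensor H coact (coact m)
      = (TensorProduct.assoc k M H H).symm
          (LinearMap.lTensor M (Coalgebra.comul (R := k)) (coact m))) ∧
  (∀ m : M,
    TensorProduct.rid k M (LinearMap.lTensor M (Coalgebra.counit (R := k)) (coact m)) = m) ∧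
  (∀ (h : H) (m : M) (s t : Finset ℕ) (a b c : ℕ → H) (m₀ : ℕ → M) (m₁ : ℕ → H),
    LinearMap.rTensor H (Coalgebra.comul (R := k)) (Coalgebra.comul (R := k) h)
        = ∑ i ∈ s, (a i ⊗ₜ[k] b i) ⊗ₜ[k] c i →
    coact m = ∑ j ∈ t, m₀ j ⊗ₜ[k] m₁ j →
    coact (act h m) = ∑ i ∈ s, ∑ j ∈ t,
      act (b i) (m₀ j) ⊗ₜ[k] (β (c i) * m₁ j * α (Sinv (a i))))

/-- Characterization of the action `h · (m ⊗ n) = θ₁(h₁)·m ⊗ θ₂(h₂)·n` on `M ⊗ N`. -/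
def TensorActChar (θ₁ θ₂ : H → H) {M N : Type} [AddCommGroup M] [Module k M]
    [AddCommGroup N] [Module k N]
    (actM : H →ₗ[k] M →ₗ[k] M) (actN : H →ₗ[k] N →ₗ[k] N)
    (act : H →ₗ[k] (M ⊗[k] N) →ₗ[k] (M ⊗[k] N)) : Prop :=
  ∀ (h : H) (m : M) (n : N) (s : Finset ℕ) (p q : ℕ → H),
    Coalgebra.comul (R := k) h = ∑ i ∈ s, p i ⊗ₜ[k] q i →
    act h (m ⊗ₜ[k] n) = ∑ i ∈ s, actM (θ₁ (p i)) m ⊗ₜ[k] actN (θ₂ (q i)) n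

/-- Characterization of the "type two" action `h · (m ⊗ n) = h₂·m ⊗ h₁·n` on `M ⊗ N`. -/
def TensorActCharTwo {M N : Type} [AddCommGroup M] [Module k M]
    [AddCommGroup N] [Module k N]
    (actM : H →ₗ[k] M →ₗ[k] M) (actN : H →ₗ[k] N →ₗ[k] N)
    (act : H →ₗ[k] (M ⊗[k] N) →ₗ[k] (M ⊗[k] N)) : Prop :=
  ∀ (h : H) (m : M) (n : N) (s : Finset ℕ) (p q : ℕ → H),
    Coalgebra.comul (R := k) h = ∑ i ∈ s, p i ⊗ₜ[k] q i →
    act h (m ⊗ₜ[k] n) = ∑ i ∈ s, actM (q i) m ⊗ₜ[k] actN (p i) n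

/-- Characterization of the coaction `m ⊗ n ↦ (m₍₀₎ ⊗ n₍₀₎) ⊗ n₍₁₎ m₍₁₎` on `M ⊗ N`. -/
def TensorCoactChar {M N : Type} [AddCommGroup M] [Module k M]
    [AddCommGroup N] [Module k N]
    (coactM : M →ₗ[k] M ⊗[k] H) (coactN : N →ₗ[k] N ⊗[k] H)
    (coact : M ⊗[k] N →ₗ[k] (M ⊗[k] N) ⊗[k] H) : Prop :=
  ∀ (m : M) (n : N) (s t : Finset ℕ) (m₀ : ℕ → M) (m₁ : ℕ → H) (n₀ : ℕ → N) (n₁ : ℕ → H),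
    coactM m = ∑ i ∈ s, m₀ i ⊗ₜ[k] m₁ i →
    coactN n = ∑ j ∈ t, n₀ j ⊗ₜ[k] n₁ j →
    coact (m ⊗ₜ[k] n) = ∑ i ∈ s, ∑ j ∈ t, (m₀ i ⊗ₜ[k] n₀ j) ⊗ₜ[k] (n₁ j * m₁ i)

/-- Characterization of the "type two" coaction `m ⊗ n ↦ (m₍₀₎ ⊗ n₍₀₎) ⊗ m₍₁₎ n₍₁₎`. -/
def TensorCoactCharTwo {M N : Type} [AddCommGroup M] [Module k M]
    [AddCommGroup N] [Module k N]
    (coactM : M →ₗ[k] M ⊗[k] H) (coactN : N →ₗ[k] N ⊗[k] H)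
    (coact : M ⊗[k] N →ₗ[k] (M ⊗[k] N) ⊗[k] H) : Prop :=
  ∀ (m : M) (n : N) (s t : Finset ℕ) (m₀ : ℕ → M) (m₁ : ℕ → H) (n₀ : ℕ → N) (n₁ : ℕ → H),
    coactM m = ∑ i ∈ s, m₀ i ⊗ₜ[k] m₁ i →
    coactN n = ∑ j ∈ t, n₀ j ⊗ₜ[k] n₁ j →
    coact (m ⊗ₜ[k] n) = ∑ i ∈ s, ∑ j ∈ t, (m₀ i ⊗ₜ[k] n₀ j) ⊗ₜ[k] (m₁ i * n₁ j)

/-- Characterization of the action `(h · f)(m) = f (θ(h) · m)` on the dual space. -/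
def DualActChar (θ : H → H) {M : Type} [AddCommGroup M] [Module k M]
    (actM : H →ₗ[k] M →ₗ[k] M)
    (actD : H →ₗ[k] Module.Dual k M →ₗ[k] Module.Dual k M) : Prop :=
  ∀ (h : H) (f : Module.Dual k M) (m : M), actD h f m = f (actM (θ h) m)

/-- Characterization of the coaction `f₍₀₎(m) ⊗ f₍₁₎ = f(m₍₀₎) ⊗ σ(m₍₁₎)` on the dual space
(expressed through contraction against evaluation at each `m`). -/
def DualCoactChar (σ : H → H) {M : Type} [AddCommGroup M] [Module k M]
    (coactM : M →ₗ[k] M ⊗[k] H)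
    (coactD : Module.Dual k M →ₗ[k] Module.Dual k M ⊗[k] H) : Prop :=
  ∀ (f : Module.Dual k M) (m : M) (t : Finset ℕ) (m₀ : ℕ → M) (m₁ : ℕ → H),
    coactM m = ∑ j ∈ t, m₀ j ⊗ₜ[k] m₁ j →
    TensorProduct.lid k H (LinearMap.rTensor H (Module.Dual.eval k M m) (coactD f))
      = ∑ j ∈ t, f (m₀ j) • σ (m₁ j)

/-- Characterization of the action `(h · u)(m) = θ(h₁) · u (θ(S(h₂)) · m)` on `End(M)`. -/
def EndActChar (θ : H → H) {M : Type} [AddCommGroup M] [Module k M]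
    (actM : H →ₗ[k] M →ₗ[k] M)
    (actE : H →ₗ[k] Module.End k M →ₗ[k] Module.End k M) : Prop :=
  ∀ (h : H) (u : Module.End k M) (m : M) (s : Finset ℕ) (p q : ℕ → H),
    Coalgebra.comul (R := k) h = ∑ i ∈ s, p i ⊗ₜ[k] q i →
    actE h u m = ∑ i ∈ s,
      actM (θ (p i)) (u (actM (θ (HopfAlgebra.antipode (R := k) (q i))) m))

/-- Characterization of the coaction `u₍₀₎(m) ⊗ u₍₁₎ = u(m₍₀₎)₍₀₎ ⊗ Sinv(m₍₁₎) u(m₍₀₎)₍₁₎`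
on `End(M)`, expressed through contraction against evaluation at each `m`. -/
def EndCoactChar (Sinv : H → H) {M : Type} [AddCommGroup M] [Module k M]
    (coactM : M →ₗ[k] M ⊗[k] H)
    (coactE : Module.End k M →ₗ[k] Module.End k M ⊗[k] H) : Prop :=
  ∀ (u : Module.End k M) (m : M) (t : Finset ℕ) (m₀ : ℕ → M) (m₁ : ℕ → H)
    (r : ℕ → Finset ℕ) (n₀ : ℕ → ℕ → M) (n₁ : ℕ → ℕ → H),
    coactM m = ∑ j ∈ t, m₀ j ⊗ₜ[k] m₁ j →
    (∀ j ∈ t, coactM (u (m₀ j)) = ∑ l ∈ r j, n₀ j l ⊗ₜ[k] n₁ j l) →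
    LinearMap.rTensor H (LinearMap.applyₗ (R := k) m) (coactE u)
      = ∑ j ∈ t, ∑ l ∈ r j, n₀ j l ⊗ₜ[k] (Sinv (m₁ j) * n₁ j l)

/-- Characterization of the action `(h · u)(m) = θ(h₂) · u (θ(Sinv(h₁)) · m)` on `End(M)ᵒᵖ`. -/
def EndOpActChar (θ Sinv : H → H) {M : Type} [AddCommGroup M] [Module k M]
    (actM : H →ₗ[k] M →ₗ[k] M)
    (actE : H →ₗ[k] (Module.End k M)ᵐᵒᵖ →ₗ[k] (Module.End k M)ᵐᵒᵖ) : Prop :=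
  ∀ (h : H) (u : (Module.End k M)ᵐᵒᵖ) (m : M) (s : Finset ℕ) (p q : ℕ → H),
    Coalgebra.comul (R := k) h = ∑ i ∈ s, p i ⊗ₜ[k] q i →
    (actE h u).unop m = ∑ i ∈ s,
      actM (θ (q i)) (u.unop (actM (θ (Sinv (p i))) m))

/-- Characterization of the coaction `u₍₀₎(m) ⊗ u₍₁₎ = u(m₍₀₎)₍₀₎ ⊗ u(m₍₀₎)₍₁₎ S(m₍₁₎)`
on `End(M)ᵒᵖ`, expressed through contraction against evaluation at each `m`. -/
def EndOpCoactChar {M : Type} [AddCommGroup M] [Module k M]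
    (coactM : M →ₗ[k] M ⊗[k] H)
    (coactE : (Module.End k M)ᵐᵒᵖ →ₗ[k] (Module.End k M)ᵐᵒᵖ ⊗[k] H) : Prop :=
  ∀ (u : (Module.End k M)ᵐᵒᵖ) (m : M) (t : Finset ℕ) (m₀ : ℕ → M) (m₁ : ℕ → H)
    (r : ℕ → Finset ℕ) (n₀ : ℕ → ℕ → M) (n₁ : ℕ → ℕ → H),
    coactM m = ∑ j ∈ t, m₀ j ⊗ₜ[k] m₁ j →
    (∀ j ∈ t, coactM (u.unop (m₀ j)) = ∑ l ∈ r j, n₀ j l ⊗ₜ[k] n₁ j l) →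
    LinearMap.rTensor H ((LinearMap.applyₗ (R := k) m).comp
        (MulOpposite.opLinearEquiv k).symm.toLinearMap) (coactE u)
      = ∑ j ∈ t, ∑ l ∈ r j,
          n₀ j l ⊗ₜ[k] (n₁ j l * HopfAlgebra.antipode (R := k) (m₁ j))

/-- `A`, with the Yetter-Drinfeld structure `(act, coact)`, is an algebra in the braided
category of Yetter-Drinfeld modules over `H`. -/
def IsYDAlgebra (Sinv : H → H) {A : Type} [Ring A] [Algebra k A]
    (act : H →ₗ[k] A →ₗ[k] A) (coact : A →ₗ[k] A ⊗[k] H) : Prop :=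
  IsYD k H Sinv id id act coact ∧
  (∀ (h : H) (a b : A) (s : Finset ℕ) (p q : ℕ → H),
    Coalgebra.comul (R := k) h = ∑ i ∈ s, p i ⊗ₜ[k] q i →
    act h (a * b) = ∑ i ∈ s, act (p i) a * act (q i) b) ∧
  (∀ h : H, act h 1 = Coalgebra.counit (R := k) h • (1 : A)) ∧
  (coact 1 = (1 : A) ⊗ₜ[k] (1 : H)) ∧
  (∀ (a b : A) (s t : Finset ℕ) (a₀ : ℕ → A) (a₁ : ℕ → H) (b₀ : ℕ → A) (b₁ : ℕ → H),
    coact a = ∑ i ∈ s, a₀ i ⊗ₜ[k] a₁ i →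
    coact b = ∑ j ∈ t, b₀ j ⊗ₜ[k] b₁ j →
    coact (a * b) = ∑ i ∈ s, ∑ j ∈ t, (a₀ i * b₀ j) ⊗ₜ[k] (b₁ j * a₁ i))

/-- Characterization of the smash product multiplication
`(a # b)(a' # b') = a a'₍₀₎ # (a'₍₁₎ · b) b'` on `A ⊗ B`. -/
def SmashMulChar {A B : Type} [Ring A] [Algebra k A] [Ring B] [Algebra k B]
    (actB : H →ₗ[k] B →ₗ[k] B) (coactA : A →ₗ[k] A ⊗[k] H)
    (mul : (A ⊗[k] B) →ₗ[k] (A ⊗[k] B) →ₗ[k] (A ⊗[k] B)) : Prop :=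
  ∀ (a a' : A) (b b' : B) (t : Finset ℕ) (a₀ : ℕ → A) (a₁ : ℕ → H),
    coactA a' = ∑ j ∈ t, a₀ j ⊗ₜ[k] a₁ j →
    mul (a ⊗ₜ[k] b) (a' ⊗ₜ[k] b') = ∑ j ∈ t, (a * a₀ j) ⊗ₜ[k] (actB (a₁ j) b * b')

end GYD

/-!
Pull the action of `M` back along `α⁻¹` to an algebra map `f : H → End(M)`. The Yetter-Drinfeld
condition becomes `(f(h₂)m)₀ ⊗ (f(h₂)m)₁ h₁ = f(h₁)m₀ ⊗ βα⁻¹(h₂) m₁`, without antipodes. The action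
is invertible in the convolution algebra of maps from `H` to `End(M ⊗ H)`, so the condition can be
rearranged there into the analogous identities for `f ∘ S` and for the action on `End(M)`.

The coactions of `End(M)` and `End(M')ᵒᵖ` are characterized by `u(m)₀ ⊗ u(m)₁ = u₀(m₀) ⊗ m₁ u₁` and
`v(m)₀ ⊗ v(m)₁ = v₀(m₀) ⊗ βα⁻¹(v₁) m₁`. Contracting an element of `End(M) ⊗ H` in this way against
the coaction of `M` loses no information, because `H` is free and multiplication by `m₁` can be
undone by an antipode. Hence identities in `End(M) ⊗ H` may be proved after contraction.

Contracted like this, the colinearity of `τ(u) = u₀ f(u₁)` and of `σ(v) = v₀ f(S(v₁))` is the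
Yetter-Drinfeld condition. Then `σ(τ(u)) = u₀ f(u₁) f(S(u₂)) = u`, and likewise for `τ ∘ σ`.
Linearity and multiplicativity of `τ` both follow from `τ(h₂·u) f(h₁) = f(h) τ(u)`, a consequence of
the Yetter-Drinfeld condition on `End(M)`.
-/

namespace YetterDrinfeld

open Coalgebra LinearMap WithConv HopfAlgebra MulOpposite

section Convolution

variable {R C A B : Type*} [CommSemiring R] [AddCommMonoid C] [Module R C] [Coalgebra R C]
  [Semiring A] [Algebra R A] [Semiring B] [Algebra R B]

lemma sum_counit_right_smul_map {N : Type*} [AddCommMonoid N] [Module R N] (f : C →ₗ[R] N)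
    {c : C} {ι : Type*} (r : Coalgebra.Repr R c ι) :
    ∑ i ∈ r.index, counit (R := R) (r.right i) • f (r.left i) = f c := by
  have h := congr(TensorProduct.rid R N $(sum_map_tmul_counit_eq f c (repr := r)))
  simpa only [map_sum, TensorProduct.rid_tmul, one_smul] using h

variable (R C) in
/-- The constant `c ↦ ε(c) a` of the convolution algebra, through which elements of `A` are
multiplied with convolution elements. -/
def constConv (a : A) : WithConv (C →ₗ[R] A) :=
  toConv ((counit (R := R) (A := C)).smulRight a)

lemma constConv_mul_apply (a : A) (f : WithConv (C →ₗ[R] A)) (c : C) :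
    (constConv R C a * f) c = a * f c := by
  rw [(ℛ R c).convMul_apply]
  simp only [constConv, smulRight_apply, smul_mul_assoc, ← mul_smul_comm, ← Finset.mul_sum,
    ← map_smul, ← map_sum, sum_counit_smul]

lemma mul_constConv_apply (f : WithConv (C →ₗ[R] A)) (a : A) (c : C) :
    (f * constConv R C a) c = f c * a := by
  rw [(ℛ R c).convMul_apply, ← sum_counit_right_smul_map f.ofConv (ℛ R c), Finset.sum_mul]
  simp only [constConv, smulRight_apply, mul_smul_comm, smul_mul_assoc]

lemma conv_mul_constConv_mul_apply (f g : WithConv (C →ₗ[R] A)) (a : A) {c : C} {ι : Type*}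
    (r : Coalgebra.Repr R c ι) :
    (f * constConv R C a * g) c = ∑ i ∈ r.index, f (r.left i) * a * g (r.right i) := by
  simp only [r.convMul_apply, mul_constConv_apply]

lemma conv_mul_conv_mul_apply (f g h : WithConv (C →ₗ[R] A)) {c : C} {ι : Type*} {s : Finset ι}
    {x y z : ι → C}
    (hc : rTensor C comul (comul (R := R) c) = ∑ i ∈ s, (x i ⊗ₜ[R] y i) ⊗ₜ[R] z i) :
    (f * g * h) c = ∑ i ∈ s, f (x i) * g (y i) * h (z i) := by
  calc (f * g * h) c
      = mul' R A (TensorProduct.map (mul' R A ∘ₗ TensorProduct.map f.ofConv g.ofConv) h.ofConv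
          (rTensor C comul (comul c))) := by
        rw [map_rTensor]
        rfl
    _ = ∑ i ∈ s, f (x i) * g (y i) * h (z i) := by simp [hc]

lemma constConv_mul_constConv (a b : A) :
    constConv R C a * constConv R C b = constConv R C (a * b) := by
  ext c
  exact (constConv_mul_apply a (constConv R C b) c).trans (mul_smul_comm _ _ _)

lemma algHom_comp_conv_eq_one (φ : A →ₐ[R] B) {f g : C →ₗ[R] A} (hfg : toConv f * toConv g = 1) :
    toConv (φ.toLinearMap ∘ₗ f) * toConv (φ.toLinearMap ∘ₗ g) = 1 := by
  have h := algHom_comp_convMul_distrib φ (toConv f) (toConv g)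
  rw [hfg] at h
  ext c
  simpa using congr($h.symm c)

end Convolution

section Antipode

variable {R H A : Type*} [CommSemiring R] [Semiring H] [HopfAlgebra R H] [Semiring A]
  [Algebra R A]

lemma algHom_conv_antipode (f : H →ₐ[R] A) :
    toConv f.toLinearMap * toConv (f.toLinearMap ∘ₗ antipode R) = 1 :=
  algHom_comp_conv_eq_one f (f := LinearMap.id) id_mul_antipode

lemma antipode_conv_algHom (f : H →ₐ[R] A) :
    toConv (f.toLinearMap ∘ₗ antipode R) * toConv f.toLinearMap = 1 :=
  algHom_comp_conv_eq_one f (g := LinearMap.id) antipode_mul_id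

/-- An antipode `T` of `H` with respect to the opposite product: `T(h₂) h₁ = ε(h) = h₂ T(h₁)`.
The inverse of a bijective antipode is one. -/
structure IsSkewAntipode (T : H →ₗ[R] H) : Prop where
  sum_mul_left (h : H) : ∑ i ∈ (ℛ R h).index, T ((ℛ R h).right i) * (ℛ R h).left i =
    algebraMap R H (counit h)
  sum_right_mul (h : H) : ∑ i ∈ (ℛ R h).index, (ℛ R h).right i * T ((ℛ R h).left i) =
    algebraMap R H (counit h)

namespace IsSkewAntipode

variable {T : H →ₗ[R] H}

lemma of_inverse (hT : ∀ h, antipode R (T h) = h) (hT' : ∀ h, T (antipode R h) = h) :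
    IsSkewAntipode T where
  sum_mul_left h := by
    refine Function.LeftInverse.injective hT' ?_
    simp only [map_sum, antipode_mul_antidistrib, hT, sum_antipode_mul_eq_algebraMap_counit,
      Algebra.algebraMap_eq_smul_one, map_smul, antipode_one]
  sum_right_mul h := by
    refine Function.LeftInverse.injective hT' ?_
    simp only [map_sum, antipode_mul_antidistrib, hT, sum_mul_antipode_eq_algebraMap_counit,
      Algebra.algebraMap_eq_smul_one, map_smul, antipode_one]

lemma conv_comp_op (hT : IsSkewAntipode T) (j : Hᵐᵒᵖ →ₐ[R] A) :
    toConv (j.toLinearMap ∘ₗ (opLinearEquiv R).toLinearMap) *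
      toConv (j.toLinearMap ∘ₗ (opLinearEquiv R).toLinearMap ∘ₗ T) = 1 := by
  ext h
  refine ((ℛ R h).convMul_apply _ _).trans ?_
  simp [← map_mul, ← op_mul, ← map_sum, ← Finset.op_sum, hT.sum_mul_left,
    ← MulOpposite.algebraMap_apply]

lemma comp_op_conv (hT : IsSkewAntipode T) (j : Hᵐᵒᵖ →ₐ[R] A) :
    toConv (j.toLinearMap ∘ₗ (opLinearEquiv R).toLinearMap ∘ₗ T) *
      toConv (j.toLinearMap ∘ₗ (opLinearEquiv R).toLinearMap) = 1 := by
  ext h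
  refine ((ℛ R h).convMul_apply _ _).trans ?_
  simp [← map_mul, ← op_mul, ← map_sum, ← Finset.op_sum, hT.sum_right_mul,
    ← MulOpposite.algebraMap_apply]

end IsSkewAntipode

end Antipode

section Comodule

variable {R C M N X Y : Type*} [CommSemiring R]
  [AddCommMonoid M] [Module R M] [AddCommMonoid N] [Module R N] [AddCommMonoid X] [Module R X]
  [AddCommMonoid Y] [Module R Y]

lemma rTensorHomToHomRTensor_injective [Module.Free R Y] :
    Function.Injective (rTensorHomToHomRTensor (.id R) M N Y) := by
  classical
  let b := Module.Free.chooseBasis R Y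
  have coord (W : (M →ₗ[R] N) ⊗[R] Y) (m : M) (i) :
      TensorProduct.equivFinsuppOfBasisRight b (rTensorHomToHomRTensor (.id R) M N Y W m) i =
        TensorProduct.equivFinsuppOfBasisRight b W i m := by
    induction W with
    | zero => simp
    | tmul w y => simp
    | add W W' hW hW' => simp_all
  intro W W' h
  refine (TensorProduct.equivFinsuppOfBasisRight b).injective (Finsupp.ext fun i ↦ ?_)
  ext m
  rw [← coord, ← coord, h]

variable [AddCommMonoid C] [Module R C]

/-- The map `m ↦ P(m₁)(g(m₀))`: a family `P` of operators on `X` indexed by `C` acts on the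
right on linear maps from a `C`-comodule `M` to `X`. -/
def convAct (δ : M →ₗ[R] M ⊗[R] C) (P : C →ₗ[R] Module.End R X) (g : M →ₗ[R] X) : M →ₗ[R] X :=
  TensorProduct.lift P.flip ∘ₗ rTensor C g ∘ₗ δ

/-- The map `w ⊗ c ↦ (m ↦ w(m₀) ⊗ μ(m₁, c))`, which pairs a `Hom(M, N)`-valued tensor with the
coaction `δ` of `M`, the two coefficients being combined by `μ`. -/
def contract (δ : M →ₗ[R] M ⊗[R] C) (μ : C →ₗ[R] Module.End R C) :
    (M →ₗ[R] N) ⊗[R] C →ₗ[R] M →ₗ[R] N ⊗[R] C :=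
  lcomp R _ δ ∘ₗ homTensorHomMap (.id R) M C N C ∘ₗ lTensor _ μ.flip

lemma contract_tmul (δ : M →ₗ[R] M ⊗[R] C) (μ : C →ₗ[R] Module.End R C) (w : M →ₗ[R] N) (c : C) :
    contract δ μ (w ⊗ₜ c) = TensorProduct.map w (μ.flip c) ∘ₗ δ := by
  rw [contract, comp_apply, comp_apply, lTensor_tmul, homTensorHomMap_apply, lcomp_apply']

lemma contract_eq_convAct (δ : M →ₗ[R] M ⊗[R] C) (μ : C →ₗ[R] Module.End R C)
    (W : (M →ₗ[R] N) ⊗[R] C) :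
    contract δ μ W =
      convAct δ (lTensorHom N ∘ₗ μ) (rTensorHomToHomRTensor (.id R) M N C W) := by
  induction W with
  | zero => simp [convAct]
  | tmul w c =>
    rw [contract_tmul, convAct, ← comp_assoc]
    congr 1
    ext
    simp
  | add W W' hW hW' =>
    rw [map_add, hW, hW', map_add]
    simp only [convAct, rTensor_add, comp_add, add_comp]

lemma contract_rTensor_llcomp (δ : M →ₗ[R] M ⊗[R] C) (μ : C →ₗ[R] Module.End R C) (g : N →ₗ[R] X)
    (W : (M →ₗ[R] N) ⊗[R] C) :
    contract δ μ (rTensor C (llcomp R M N X g) W) = rTensor C g ∘ₗ contract δ μ W := by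
  induction W with
  | zero => simp
  | tmul w c =>
    rw [rTensor_tmul, contract_tmul, contract_tmul, ← comp_assoc]
    refine congrArg (· ∘ₗ δ) (TensorProduct.ext' fun m h ↦ ?_)
    simp
  | add W W' hW hW' => simp only [map_add, hW, hW', comp_add]

/-- `ρ` is the coaction on `End(M)` with `u(m)₀ ⊗ u(m)₁ = u₀(m₀) ⊗ μ(m₁, u₁)`. -/
def IsEndCoaction (δ : M →ₗ[R] M ⊗[R] C) (μ : C →ₗ[R] Module.End R C)
    (ρ : Module.End R M →ₗ[R] Module.End R M ⊗[R] C) : Prop :=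
  ∀ u : Module.End R M, contract δ μ (ρ u) = δ ∘ₗ u

variable [Coalgebra R C]

/-- The axioms of a right `C`-comodule for the coaction `δ`. -/
structure IsComodule (δ : M →ₗ[R] M ⊗[R] C) : Prop where
  coassoc (m : M) :
    rTensor C δ (δ m) = (TensorProduct.assoc R M C C).symm (lTensor M comul (δ m))
  lTensor_counit (m : M) : TensorProduct.rid R M (lTensor M counit (δ m)) = m

/-- The family of operators `Q` undoes the family `P`: `Q(c₂)(P(c₁)(x)) = ε(c) x`. -/
def Cancels (Q P : C →ₗ[R] Module.End R X) : Prop :=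
  ∀ (c : C) (x : X), ∑ i ∈ (ℛ R c).index, Q ((ℛ R c).right i) (P ((ℛ R c).left i) x) =
    counit (R := R) c • x

lemma Cancels.lTensor {Q P : C →ₗ[R] Module.End R X} (h : Cancels Q P) :
    Cancels (lTensorHom N ∘ₗ Q) (lTensorHom N ∘ₗ P) := by
  intro c x
  induction x with
  | zero => simp
  | tmul n x => simp [← TensorProduct.tmul_sum, h c x]
  | add x y hx hy => simp only [map_add, Finset.sum_add_distrib, hx, hy, smul_add]

variable {δ : M →ₗ[R] M ⊗[R] C} {μ θ : C →ₗ[R] Module.End R C}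

lemma IsComodule.convAct_convAct (hδ : IsComodule δ) {Q P : C →ₗ[R] Module.End R X}
    (hQP : Cancels Q P) (g : M →ₗ[R] X) : convAct δ Q (convAct δ P g) = g := by
  let Φ : (M ⊗[R] C) ⊗[R] C →ₗ[R] X :=
    TensorProduct.lift (Q.flip ∘ₗ TensorProduct.lift P.flip ∘ₗ rTensor C g)
  have iterate : convAct δ Q (convAct δ P g) = Φ ∘ₗ rTensor C δ ∘ₗ δ := by
    simp only [convAct, ← comp_assoc]
    refine congrArg (· ∘ₗ δ) (TensorProduct.ext' fun m c ↦ ?_)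
    simp [Φ]
  have cancel (z : M ⊗[R] C) : Φ ((TensorProduct.assoc R M C C).symm (lTensor M comul z)) =
      g (TensorProduct.rid R M (lTensor M counit z)) := by
    induction z with
    | zero => simp
    | tmul m c =>
      simp [Φ, ← (ℛ R c).eq, TensorProduct.tmul_sum, hQP c (g m)]
    | add z z' hz hz' => simp only [map_add, hz, hz']
  ext m
  rw [iterate, comp_apply, comp_apply, hδ.coassoc, cancel, hδ.lTensor_counit]

lemma IsComodule.contract_injective [Module.Free R C] (hδ : IsComodule δ) (hθμ : Cancels θ μ) :
    Function.Injective (contract (N := N) δ μ) := by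
  intro W W' h
  refine rTensorHomToHomRTensor_injective ?_
  rw [← hδ.convAct_convAct (hθμ.lTensor (N := N)) (rTensorHomToHomRTensor (.id R) M N C W),
    ← hδ.convAct_convAct (hθμ.lTensor (N := N)) (rTensorHomToHomRTensor (.id R) M N C W'),
    ← contract_eq_convAct, ← contract_eq_convAct, h]

lemma IsComodule.isEndCoaction_of_convAct (hδ : IsComodule δ) (hμθ : Cancels μ θ)
    {ρ : Module.End R M →ₗ[R] Module.End R M ⊗[R] C}
    (hρ : ∀ u, rTensorHomToHomRTensor (.id R) M M C (ρ u) =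
      convAct δ (lTensorHom M ∘ₗ θ) (δ ∘ₗ u)) :
    IsEndCoaction δ μ ρ := fun u ↦ by
  rw [contract_eq_convAct, hρ, hδ.convAct_convAct hμθ.lTensor]

lemma sum_map_curry_comul (T : C ⊗[R] C →ₗc[R] C) (h c : C) :
    ∑ i ∈ (ℛ R c).index, TensorProduct.map
      ((TensorProduct.curry T.toLinearMap).flip ((ℛ R c).left i))
      ((TensorProduct.curry T.toLinearMap).flip ((ℛ R c).right i)) (comul h) =
    comul (R := R) (T (h ⊗ₜ c)) := by
  rw [← CoalgHomClass.map_comp_comul_apply, TensorProduct.comul_tmul, ← (ℛ R c).eq, ← (ℛ R h).eq]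
  simp [TensorProduct.sum_tmul, TensorProduct.tmul_sum]

lemma sum_map_map_assoc_symm_comul (T : C ⊗[R] C →ₗc[R] C) (w : M →ₗ[R] N) (c : C)
    (z : M ⊗[R] C) :
    ∑ i ∈ (ℛ R c).index, TensorProduct.map
        (TensorProduct.map w ((TensorProduct.curry T.toLinearMap).flip ((ℛ R c).left i)))
        ((TensorProduct.curry T.toLinearMap).flip ((ℛ R c).right i))
        ((TensorProduct.assoc R M C C).symm (lTensor M comul z)) =
      (TensorProduct.assoc R N C C).symm (lTensor N comul
        (TensorProduct.map w ((TensorProduct.curry T.toLinearMap).flip c) z)) := by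
  induction z with
  | zero => simp
  | add z z' hz hz' => simp only [map_add, Finset.sum_add_distrib, hz, hz']
  | tmul m h =>
    simp only [lTensor_tmul, TensorProduct.map_map_assoc_symm, TensorProduct.map_tmul, ← map_sum,
      ← TensorProduct.tmul_sum, sum_map_curry_comul]
    rfl

lemma IsComodule.contract_contract (hδ : IsComodule δ) (T : C ⊗[R] C →ₗc[R] C)
    (W : (M →ₗ[R] N) ⊗[R] C) :
    contract δ (TensorProduct.curry T.toLinearMap)
      (rTensor C (contract δ (TensorProduct.curry T.toLinearMap))
        ((TensorProduct.assoc R _ C C).symm (lTensor _ comul W))) =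
    (TensorProduct.assoc R N C C).symm.toLinearMap ∘ₗ lTensor N comul ∘ₗ
      contract δ (TensorProduct.curry T.toLinearMap) W := by
  induction W with
  | zero => simp
  | add W W' hW hW' => simp only [map_add, hW, hW', comp_add]
  | tmul w c =>
    ext m
    have iterate (μ : C →ₗ[R] Module.End R C) (a b : C) :
        contract δ μ (contract δ μ (w ⊗ₜ a) ⊗ₜ b) m =
          TensorProduct.map (TensorProduct.map w (μ.flip a)) (μ.flip b)
            ((TensorProduct.assoc R M C C).symm (lTensor M comul (δ m))) := by
      rw [contract_tmul, contract_tmul, ← hδ.coassoc, comp_apply, map_rTensor]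
    rw [lTensor_tmul, ← (ℛ R c).eq]
    simp only [TensorProduct.tmul_sum, map_sum, TensorProduct.assoc_symm_tmul, rTensor_tmul,
      LinearMap.sum_apply, iterate, sum_map_map_assoc_symm_comul]
    rw [contract_tmul]
    rfl

lemma rid_lTensor_counit_map (T : C ⊗[R] C →ₗc[R] C) (w : M →ₗ[R] N) (c : C) (z : M ⊗[R] C) :
    TensorProduct.rid R N (lTensor N counit
      (TensorProduct.map w ((TensorProduct.curry T.toLinearMap).flip c) z)) =
        counit (R := R) c • w (TensorProduct.rid R M (lTensor M counit z)) := by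
  induction z with
  | zero => simp
  | add z z' hz hz' => simp only [map_add, hz, hz', smul_add]
  | tmul m h =>
    have counit_T : counit (R := R) (T (h ⊗ₜ c)) = counit c * counit (R := R) h := by
      rw [CoalgHomClass.counit_comp_apply, TensorProduct.counit_tmul, smul_eq_mul]
    simp [counit_T, mul_smul]

lemma IsComodule.rid_lTensor_counit_contract (hδ : IsComodule δ) (T : C ⊗[R] C →ₗc[R] C)
    (W : (M →ₗ[R] N) ⊗[R] C) (m : M) :
    TensorProduct.rid R N
        (lTensor N counit (contract δ (TensorProduct.curry T.toLinearMap) W m)) =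
      TensorProduct.rid R (M →ₗ[R] N) (lTensor _ counit W) m := by
  induction W with
  | zero => simp
  | add W W' hW hW' => simp only [map_add, LinearMap.add_apply, hW, hW']
  | tmul w c =>
    rw [contract_tmul, comp_apply, rid_lTensor_counit_map, hδ.lTensor_counit]
    simp

lemma IsComodule.of_isEndCoaction [Module.Free R C] (hδ : IsComodule δ) {T : C ⊗[R] C →ₗc[R] C}
    {ρ : Module.End R M →ₗ[R] Module.End R M ⊗[R] C}
    (hθ : Cancels θ (TensorProduct.curry T.toLinearMap))
    (hρ : IsEndCoaction δ (TensorProduct.curry T.toLinearMap) ρ) : IsComodule ρ where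
  coassoc u := by
    set μ := TensorProduct.curry T.toLinearMap with hμ
    have contract_ρ : contract δ μ ∘ₗ ρ = llcomp R M M (M ⊗[R] C) δ := LinearMap.ext hρ
    have injective : Function.Injective fun W : (Module.End R M ⊗[R] C) ⊗[R] C ↦
        contract δ μ (rTensor C (contract δ μ) W) :=
      (hδ.contract_injective hθ).comp
        (Module.Flat.rTensor_preserves_injective_linearMap _ (hδ.contract_injective hθ))
    refine injective ?_
    dsimp only
    rw [← rTensor_comp_apply, contract_ρ, contract_rTensor_llcomp, hρ u, hμ,
      hδ.contract_contract T, ← hμ, hρ u]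
    ext m
    exact hδ.coassoc (u m)
  lTensor_counit u := by
    ext m
    rw [← hδ.rid_lTensor_counit_contract T, hρ u]
    exact hδ.lTensor_counit (u m)

end Comodule

section Twist

variable {R A C : Type*} [CommSemiring R] [Semiring A] [Algebra R A]
  [AddCommMonoid C] [Module R C]

/-- The map `a ↦ a₀ φ(a₁)`. Both `τ` and its inverse are of this form. -/
def twist (φ : C →ₗ[R] A) (ρ : A →ₗ[R] A ⊗[R] C) : A →ₗ[R] A :=
  mul' R A ∘ₗ lTensor A φ ∘ₗ ρ

variable [Coalgebra R C] {φ ψ : C →ₗ[R] A} {ρ ρ' : A →ₗ[R] A ⊗[R] C}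

lemma mul'_lTensor_conv (φ ψ : C →ₗ[R] A) (W : A ⊗[R] C) :
    mul' R A (TensorProduct.map (mul' R A ∘ₗ lTensor A φ) ψ
        ((TensorProduct.assoc R A C C).symm (lTensor A comul W))) =
      mul' R A (lTensor A (toConv φ * toConv ψ).ofConv W) := by
  induction W with
  | zero => simp
  | tmul a c =>
    have conv_apply := (ℛ R c).convMul_apply (toConv φ) (toConv ψ)
    rw [lTensor_tmul, lTensor_tmul, mul'_apply, conv_apply, ← (ℛ R c).eq]
    simp [TensorProduct.tmul_sum, mul_assoc, Finset.mul_sum]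
  | add W W' hW hW' => simp only [map_add, hW, hW']

lemma twist_twist (hρ : IsComodule ρ) (hφψ : toConv φ * toConv ψ = 1)
    (hρ' : ρ' ∘ₗ twist φ ρ = rTensor C (twist φ ρ) ∘ₗ ρ) (a : A) :
    twist ψ ρ' (twist φ ρ a) = a := by
  have counit_smul (W : A ⊗[R] C) : mul' R A (lTensor A (1 : WithConv (C →ₗ[R] A)).ofConv W) =
      TensorProduct.rid R A (lTensor A counit W) := by
    induction W with
    | zero => simp
    | tmul a c => simp [Algebra.algebraMap_eq_smul_one]
    | add W W' hW hW' => simp only [map_add, hW, hW']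
  calc twist ψ ρ' (twist φ ρ a)
      = mul' R A (lTensor A ψ (rTensor C (twist φ ρ) (ρ a))) :=
        congr(mul' R A (lTensor A ψ ($hρ' a)))
    _ = mul' R A (TensorProduct.map (mul' R A ∘ₗ lTensor A φ) ψ (rTensor C ρ (ρ a))) := by
        rw [map_rTensor, ← comp_apply (lTensor A ψ), lTensor_comp_rTensor, twist, comp_assoc]
    _ = a := by rw [hρ.coassoc, mul'_lTensor_conv, hφψ, counit_smul, hρ.lTensor_counit]

end Twist

section Crossed

variable {R C M : Type*} [CommSemiring R] [AddCommMonoid C] [Module R C] [Coalgebra R C]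
  [AddCommMonoid M] [Module R M] {δ : M →ₗ[R] M ⊗[R] C} {φ : C →ₗ[R] Module.End R M}
  {μ ν : C →ₗ[R] Module.End R C} {ρ : Module.End R M →ₗ[R] Module.End R M ⊗[R] C}

/-- The crossed form of the Yetter-Drinfeld compatibility of a coaction `δ` with operators `φ(h)`:
`φ(h₂)(m)₀ ⊗ μ(φ(h₂)(m)₁, h₁) = φ(h₁)(m₀) ⊗ ν(m₁, h₂)`. -/
def IsCrossed (δ : M →ₗ[R] M ⊗[R] C) (φ : C →ₗ[R] Module.End R M)
    (μ ν : C →ₗ[R] Module.End R C) : Prop :=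
  ∀ (h : C) (m : M),
    ∑ i ∈ (ℛ R h).index, lTensor M (μ.flip ((ℛ R h).left i)) (δ (φ ((ℛ R h).right i) m)) =
      ∑ i ∈ (ℛ R h).index, TensorProduct.map (φ ((ℛ R h).left i)) (ν.flip ((ℛ R h).right i)) (δ m)

/-- The map `(w ⊗ c) ⊗ d ↦ (m ↦ w(φ(d)(m)₀) ⊗ μ(φ(d)(m)₁, c))`: `contract` after the operator `φ(d)`
has been applied to the argument. -/
def contractThen (δ : M →ₗ[R] M ⊗[R] C) (φ : C →ₗ[R] Module.End R M)
    (μ : C →ₗ[R] Module.End R C) : (Module.End R M ⊗[R] C) ⊗[R] C →ₗ[R] M →ₗ[R] M ⊗[R] C :=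
  TensorProduct.lift (llcomp R M M (M ⊗[R] C) ∘ₗ contract δ μ) ∘ₗ lTensor _ φ

lemma IsCrossed.contract_rTensor (hφ : IsCrossed δ φ μ ν) (W : Module.End R M ⊗[R] C) :
    contract δ ν (rTensor C (mul' R _ ∘ₗ lTensor _ φ)
        ((TensorProduct.assoc R _ C C).symm (lTensor _ comul W))) =
      contractThen δ φ μ ((TensorProduct.assoc R _ C C).symm (lTensor _ comul W)) := by
  induction W with
  | zero => simp
  | add W W' hW hW' => simp only [map_add, hW, hW']
  | tmul w c =>
    ext m
    have crossed := congr(rTensor C w $(hφ c m))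
    simp only [map_sum, lTensor, rTensor_map, comp_id] at crossed
    rw [lTensor_tmul, ← (ℛ R c).eq]
    simp only [TensorProduct.tmul_sum, map_sum, TensorProduct.assoc_symm_tmul, rTensor_tmul,
      LinearMap.sum_apply, contract_tmul, contractThen, comp_apply, lTensor_tmul,
      TensorProduct.lift.tmul, llcomp_apply, mul'_apply]
    exact crossed.symm

lemma IsCrossed.contract_twist (hφ : IsCrossed δ φ μ ν) (hρ : IsComodule ρ)
    (hρμ : IsEndCoaction δ μ ρ) (u : Module.End R M) :
    contract δ ν (rTensor C (twist φ ρ) (ρ u)) = δ ∘ₗ twist φ ρ u := by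
  have contractThen_rTensor (W : Module.End R M ⊗[R] C) :
      contractThen δ φ μ (rTensor C ρ W) = δ ∘ₗ mul' R _ (lTensor _ φ W) := by
    induction W with
    | zero => simp
    | tmul w c =>
      simp only [rTensor_tmul, contractThen, comp_apply, lTensor_tmul, TensorProduct.lift.tmul,
        hρμ w]
      rfl
    | add W W' hW hW' => simp only [map_add, hW, hW', comp_add]
  calc contract δ ν (rTensor C (twist φ ρ) (ρ u))
      = contract δ ν (rTensor C (mul' R _ ∘ₗ lTensor _ φ) (rTensor C ρ (ρ u))) := by
        rw [← rTensor_comp_apply, twist, comp_assoc]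
    _ = contractThen δ φ μ (rTensor C ρ (ρ u)) := by
        rw [hρ.coassoc, hφ.contract_rTensor]
    _ = δ ∘ₗ twist φ ρ u := contractThen_rTensor (ρ u)

lemma IsCrossed.comp_twist [Module.Free R C] {θ : C →ₗ[R] Module.End R C}
    {ρ' : Module.End R M →ₗ[R] Module.End R M ⊗[R] C} (hφ : IsCrossed δ φ μ ν)
    (hδ : IsComodule δ) (hθν : Cancels θ ν) (hρ : IsComodule ρ) (hρμ : IsEndCoaction δ μ ρ)
    (hρ'ν : IsEndCoaction δ ν ρ') : ρ' ∘ₗ twist φ ρ = rTensor C (twist φ ρ) ∘ₗ ρ :=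
  LinearMap.ext fun u ↦ hδ.contract_injective hθν <|
    (hρ'ν (twist φ ρ u)).trans (hφ.contract_twist hρ hρμ u).symm

end Crossed

section YetterDrinfeld

variable {R H M : Type*} [CommSemiring R] [Semiring H] [Bialgebra R H]
  [AddCommMonoid M] [Module R M]

/-- The operators `m ⊗ x ↦ φ(h)(m) ⊗ x`, as an element of the convolution algebra. -/
def actConv (φ : H →ₗ[R] Module.End R M) : WithConv (H →ₗ[R] Module.End R (M ⊗[R] H)) :=
  toConv (rTensorHom H ∘ₗ φ)

variable (M) in
/-- The operators `m ⊗ x ↦ m ⊗ x g(h)`, as an element of the convolution algebra. -/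
def mulConv (g : H →ₗ[R] H) : WithConv (H →ₗ[R] Module.End R (M ⊗[R] H)) :=
  toConv (lTensorHom M ∘ₗ (LinearMap.mul R H).flip ∘ₗ g)

/-- The operators `x ↦ g(x) h` on `H`, through which the coaction of `M'` enters that of
`End(M')ᵒᵖ`. -/
def twistedMul (g : H →ₗ[R] H) : H →ₗ[R] Module.End R H :=
  (LinearMap.mul R H ∘ₗ g).flip

/-- The operator `m ⊗ x ↦ m₀ ⊗ x m₁`: the coaction as an element of the algebra `End(M ⊗ H)`. -/
def coactMul (δ : M →ₗ[R] M ⊗[R] H) : Module.End R (M ⊗[R] H) :=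
  TensorProduct.lift ((lTensorHom M ∘ₗ LinearMap.mul R H).flip ∘ₗ δ)

/-- The Yetter-Drinfeld compatibility `(h₂·m)₀ ⊗ x (h₂·m)₁ h₁ = h₁·m₀ ⊗ x g(h₂) m₁` between the
action `φ` and the coaction `δ`, in the convolution algebra of operators on `M ⊗ H`. -/
def IsYetterDrinfeld (φ : H →ₗ[R] Module.End R M) (δ : M →ₗ[R] M ⊗[R] H) (g : H →ₗ[R] H) : Prop :=
  mulConv M .id * constConv R H (coactMul δ) * actConv φ =
    actConv φ * constConv R H (coactMul δ) * mulConv M g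

variable {φ ψ : H →ₗ[R] Module.End R M} {δ : M →ₗ[R] M ⊗[R] H} {g : H →ₗ[R] H}

lemma actConv_mul_actConv (hφψ : toConv φ * toConv ψ = 1) : actConv φ * actConv ψ = 1 :=
  algHom_comp_conv_eq_one (Module.End.rTensorAlgHom R M H) hφψ

lemma IsYetterDrinfeld.inverse (h : IsYetterDrinfeld φ δ g) (hφψ : toConv φ * toConv ψ = 1)
    (hψφ : toConv ψ * toConv φ = 1) :
    constConv R H (coactMul δ) * mulConv M g * actConv ψ =
      actConv ψ * mulConv M .id * constConv R H (coactMul δ) := by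
  set r := constConv R H (coactMul δ)
  calc r * mulConv M g * actConv ψ
      = actConv ψ * actConv φ * r * mulConv M g * actConv ψ := by
        rw [actConv_mul_actConv hψφ, one_mul]
    _ = actConv ψ * (actConv φ * r * mulConv M g) * actConv ψ := by simp only [mul_assoc]
    _ = actConv ψ * (mulConv M .id * r * actConv φ) * actConv ψ := by rw [h]
    _ = actConv ψ * mulConv M .id * r * (actConv φ * actConv ψ) := by simp only [mul_assoc]
    _ = actConv ψ * mulConv M .id * r := by rw [actConv_mul_actConv hφψ, mul_one]

lemma coactMul_tmul (δ : M →ₗ[R] M ⊗[R] H) (m : M) (x : H) :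
    coactMul δ (m ⊗ₜ x) = lTensor M (LinearMap.mul R H x) (δ m) := by
  simp [coactMul]

lemma linearMap_mul_one : LinearMap.mul R H 1 = LinearMap.id := LinearMap.ext one_mul

lemma rTensor_lTensor_apply {N P Q : Type*} [AddCommMonoid N] [Module R N] [AddCommMonoid P]
    [Module R P] [AddCommMonoid Q] [Module R Q] (f : M →ₗ[R] N) (f' : P →ₗ[R] Q) (z : M ⊗[R] P) :
    rTensor Q f (lTensor M f' z) = TensorProduct.map f f' z :=
  congr($(rTensor_comp_lTensor (f := f) (g := f')) z)

lemma IsYetterDrinfeld.isCrossed (h : IsYetterDrinfeld φ δ g) :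
    IsCrossed δ φ (LinearMap.mul R H) (twistedMul g) := fun c m ↦ by
  have at_tmul_one := congr($h c (m ⊗ₜ 1))
  rw [conv_mul_constConv_mul_apply _ _ _ (ℛ R c),
    conv_mul_constConv_mul_apply _ _ _ (ℛ R c)] at at_tmul_one
  simpa [mulConv, actConv, twistedMul, coactMul_tmul, linearMap_mul_one,
    rTensor_lTensor_apply] using at_tmul_one

lemma IsYetterDrinfeld.isCrossed_inverse (h : IsYetterDrinfeld φ δ g)
    (hφψ : toConv φ * toConv ψ = 1) (hψφ : toConv ψ * toConv φ = 1) :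
    IsCrossed δ ψ (twistedMul g) (LinearMap.mul R H) := fun c m ↦ by
  have at_tmul_one := congr($(h.inverse hφψ hψφ) c (m ⊗ₜ 1))
  rw [mul_assoc, constConv_mul_apply, mul_constConv_apply, (ℛ R c).convMul_apply,
    (ℛ R c).convMul_apply, Finset.mul_sum, Finset.sum_mul] at at_tmul_one
  simpa [mulConv, actConv, twistedMul, coactMul_tmul, linearMap_mul_one,
    rTensor_lTensor_apply] using at_tmul_one

end YetterDrinfeld

section InnerAction

variable {R H E : Type*} [CommSemiring R] [AddCommMonoid H] [Module R H] [Coalgebra R H]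
  [Semiring E] [Algebra R E] {A : H →ₗ[R] E →ₗ[R] E} {φ ψ : H →ₗ[R] E}

/-- `A` is the action `h·u = φ(h₁) u ψ(h₂)` on the algebra `E`. -/
def IsInnerAction (A : H →ₗ[R] E →ₗ[R] E) (φ ψ : H →ₗ[R] E) : Prop :=
  ∀ u : E, toConv (A.flip u) = toConv φ * constConv R H u * toConv ψ

lemma IsInnerAction.apply (hA : IsInnerAction A φ ψ) (h : H) (u : E) :
    A h u = ∑ i ∈ (ℛ R h).index, φ ((ℛ R h).left i) * u * ψ ((ℛ R h).right i) :=
  congr($(hA u) h).trans (conv_mul_constConv_mul_apply _ _ _ (ℛ R h))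

lemma IsInnerAction.sum_mul (hA : IsInnerAction A φ ψ) (hψφ : toConv ψ * toConv φ = 1) (h : H)
    (u : E) :
    ∑ i ∈ (ℛ R h).index, A ((ℛ R h).left i) u * φ ((ℛ R h).right i) = φ h * u := by
  have conv : toConv (A.flip u) * toConv φ = toConv φ * constConv R H u := by
    rw [hA, mul_assoc, hψφ, mul_one]
  have at_h := congr($conv h)
  rw [(ℛ R h).convMul_apply, mul_constConv_apply] at at_h
  exact at_h

end InnerAction

section EndAction

variable {R H M : Type*} [CommSemiring R] [Semiring H] [Bialgebra R H]
  [AddCommMonoid M] [Module R M] {φ ψ : H →ₗ[R] Module.End R M} {δ : M →ₗ[R] M ⊗[R] H}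
  {g : H →ₗ[R] H} {ρ : Module.End R M →ₗ[R] Module.End R M ⊗[R] H}
  {A : H →ₗ[R] Module.End R M →ₗ[R] Module.End R M}

variable (R H M) in
/-- The operators `m ⊗ x ↦ w(m) ⊗ x a` attached to `w ⊗ a`, which make `End(M) ⊗ H` act on
`M ⊗ H`. -/
def endMul : Module.End R M ⊗[R] H →ₗ[R] Module.End R (M ⊗[R] H) :=
  homTensorHomMap (.id R) M H M H ∘ₗ lTensor _ (LinearMap.mul R H).flip

lemma endMul_tmul (w : Module.End R M) (a : H) :
    endMul R H M (w ⊗ₜ a) = TensorProduct.map w ((LinearMap.mul R H).flip a) := by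
  simp [endMul]

lemma endMul_apply_coact (W : Module.End R M ⊗[R] H) (m : M) :
    endMul R H M W (δ m) = contract δ (LinearMap.mul R H) W m :=
  rfl

lemma endMul_map₂ (V W : Module.End R M ⊗[R] H) :
    endMul R H M (TensorProduct.map₂ (LinearMap.mul R _) (LinearMap.mul R H).flip V W) =
      endMul R H M V * endMul R H M W := by
  induction V with
  | zero => simp
  | add V V' hV hV' => simp only [map_add, LinearMap.add_apply, hV, hV', add_mul]
  | tmul v a =>
    induction W with
    | zero => simp
    | add W W' hW hW' => simp only [map_add, hW, hW', mul_add]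
    | tmul w b =>
      refine TensorProduct.ext' fun m x ↦ ?_
      simp [endMul_tmul, mul_assoc]

lemma endMul_lTensor_mul (W : Module.End R M ⊗[R] H) (x : H) (z : M ⊗[R] H) :
    endMul R H M W (lTensor M (LinearMap.mul R H x) z) =
      lTensor M (LinearMap.mul R H x) (endMul R H M W z) := by
  induction W with
  | zero => simp
  | add W W' hW hW' => simp only [map_add, LinearMap.add_apply, hW, hW']
  | tmul w a =>
    induction z with
    | zero => simp
    | add z z' hz hz' => simp only [map_add, hz, hz']
    | tmul m b => simp [endMul_tmul, mul_assoc]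

lemma contract_lTensor_mul_flip (W : Module.End R M ⊗[R] H) (a : H) (m : M) :
    contract δ (LinearMap.mul R H) (lTensor _ ((LinearMap.mul R H).flip a) W) m =
      lTensor M ((LinearMap.mul R H).flip a) (contract δ (LinearMap.mul R H) W m) := by
  simp only [← endMul_apply_coact]
  induction W with
  | zero => simp
  | add W W' hW hW' => simp only [map_add, LinearMap.add_apply, hW, hW']
  | tmul w b =>
    rw [lTensor_tmul, endMul_tmul, endMul_tmul, lTensor_map]
    congr 2
    ext
    simp [mul_assoc]

lemma contract_map_mul (B : Module.End R M →ₗ[R] Module.End R M) (W : Module.End R M ⊗[R] H)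
    (a : H) (m : M) :
    contract δ (LinearMap.mul R H) (TensorProduct.map B (LinearMap.mul R H a) W) m =
      endMul R H M (rTensor H B W) (lTensor M ((LinearMap.mul R H).flip a) (δ m)) := by
  rw [← endMul_apply_coact]
  induction W with
  | zero => simp
  | add W W' hW hW' => simp only [map_add, LinearMap.add_apply, hW, hW']
  | tmul w b =>
    rw [TensorProduct.map_tmul, rTensor_tmul, endMul_tmul, endMul_tmul, map_lTensor]
    congr 2
    ext
    simp [mul_assoc]

lemma coactMul_mul_rTensor (hρ : IsEndCoaction δ (LinearMap.mul R H) ρ) (u : Module.End R M) :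
    coactMul δ * rTensor H u = endMul R H M (ρ u) * coactMul δ := by
  refine TensorProduct.ext' fun m x ↦ ?_
  simp only [Module.End.mul_apply, rTensor_tmul, coactMul_tmul, endMul_lTensor_mul,
    endMul_apply_coact, hρ u, comp_apply]

lemma IsInnerAction.actConv_mul_endMul (hA : IsInnerAction A φ ψ) (W : Module.End R M ⊗[R] H)
    (h : H) :
    (actConv φ * constConv R H (endMul R H M W) * actConv ψ) h =
      endMul R H M (rTensor H (A h) W) := by
  rw [conv_mul_constConv_mul_apply _ _ _ (ℛ R h)]
  induction W with
  | zero => simp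
  | add W W' hW hW' => simp only [map_add, mul_add, add_mul, Finset.sum_add_distrib, hW, hW']
  | tmul w a =>
    rw [rTensor_tmul, endMul_tmul, endMul_tmul, hA.apply]
    refine TensorProduct.ext' fun m x ↦ ?_
    simp [actConv, TensorProduct.sum_tmul]

lemma IsInnerAction.actConv_flip (hA : IsInnerAction A φ ψ) (u : Module.End R M) :
    actConv (A.flip u) = actConv φ * constConv R H (rTensor H u) * actConv ψ := by
  ext1
  ext1 h
  rw [conv_mul_constConv_mul_apply _ _ _ (ℛ R h)]
  refine (congrArg (rTensorHom H) (hA.apply h u)).trans ?_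
  simp [actConv, rTensor_mul]

lemma IsYetterDrinfeld.mulConv_mul_actConv_flip (h : IsYetterDrinfeld φ δ g)
    (hφψ : toConv φ * toConv ψ = 1) (hψφ : toConv ψ * toConv φ = 1)
    (hρ : IsEndCoaction δ (LinearMap.mul R H) ρ) (hA : IsInnerAction A φ ψ) (u : Module.End R M) :
    mulConv M .id * constConv R H (coactMul δ) * actConv (A.flip u) =
      actConv φ * constConv R H (endMul R H M (ρ u)) * actConv ψ * mulConv M .id *
        constConv R H (coactMul δ) := by
  set r := constConv R H (coactMul δ)
  set w := constConv R H (rTensor H u) with hw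
  have comm : mulConv M g * w = w * mulConv M g := by
    ext1; ext1 h
    refine (mul_constConv_apply _ _ h).trans (.trans ?_ (constConv_mul_apply _ _ h).symm)
    simp [mulConv, Module.End.mul_eq_comp]
  calc mulConv M .id * r * actConv (A.flip u)
      = mulConv M .id * r * actConv φ * w * actConv ψ := by
        rw [hA.actConv_flip]; simp only [mul_assoc, hw]
    _ = actConv φ * r * (mulConv M g * w) * actConv ψ := by rw [h]; simp only [mul_assoc]; rfl
    _ = actConv φ * (r * w) * mulConv M g * actConv ψ := by rw [comm]; simp only [mul_assoc]
    _ = actConv φ * (constConv R H (endMul R H M (ρ u)) * r) * mulConv M g * actConv ψ := by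
        rw [constConv_mul_constConv, constConv_mul_constConv, coactMul_mul_rTensor hρ]
    _ = actConv φ * constConv R H (endMul R H M (ρ u)) * (r * mulConv M g * actConv ψ) := by
        simp only [mul_assoc]
    _ = actConv φ * constConv R H (endMul R H M (ρ u)) * actConv ψ * mulConv M .id * r := by
        rw [h.inverse hφψ hψφ]; simp only [mul_assoc]; rfl

lemma IsYetterDrinfeld.isCrossed_innerAction [Module.Free R H] {θ : H →ₗ[R] Module.End R H}
    (h : IsYetterDrinfeld φ δ g)
    (hφψ : toConv φ * toConv ψ = 1) (hψφ : toConv ψ * toConv φ = 1) (hδ : IsComodule δ)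
    (hθ : Cancels θ (LinearMap.mul R H))
    (hρ : IsEndCoaction δ (LinearMap.mul R H) ρ) (hA : IsInnerAction A φ ψ) :
    IsCrossed ρ A (LinearMap.mul R H) (LinearMap.mul R H).flip := fun c u ↦ by
  refine hδ.contract_injective hθ ?_
  ext m
  have at_tmul_one := congr($(h.mulConv_mul_actConv_flip hφψ hψφ hρ hA u) c (m ⊗ₜ 1))
  rw [conv_mul_constConv_mul_apply _ _ _ (ℛ R c), mul_constConv_apply,
    (ℛ R c).convMul_apply] at at_tmul_one
  simp only [hA.actConv_mul_endMul] at at_tmul_one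
  simpa [actConv, mulConv, coactMul_tmul, linearMap_mul_one, contract_lTensor_mul_flip,
    contract_map_mul, hρ _] using at_tmul_one

end EndAction

section OpComoduleAlgebra

variable {R H E : Type*} [CommSemiring R] [Semiring H] [Bialgebra R H] [Semiring E] [Algebra R E]
  {ρ : E →ₗ[R] E ⊗[R] H} {f : H →ₐ[R] E} {ψ : H →ₗ[R] E} {A : H →ₗ[R] E →ₗ[R] E}

/-- `ρ` is multiplicative as in an algebra over the category of Yetter-Drinfeld modules:
`(uv)₀ ⊗ (uv)₁ = u₀v₀ ⊗ v₁u₁`. -/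
structure IsOpComoduleAlgebra (ρ : E →ₗ[R] E ⊗[R] H) : Prop where
  map_one : ρ 1 = 1 ⊗ₜ 1
  map_mul (u v : E) :
    ρ (u * v) = TensorProduct.map₂ (LinearMap.mul R E) (LinearMap.mul R H).flip (ρ u) (ρ v)

lemma IsOpComoduleAlgebra.twist_one (hρ : IsOpComoduleAlgebra ρ) (f : H →ₐ[R] E) :
    twist f.toLinearMap ρ 1 = 1 := by
  simp [twist, hρ.map_one]

lemma IsOpComoduleAlgebra.twist_mul (hρ : IsOpComoduleAlgebra ρ) (f : H →ₐ[R] E) (v w : E) :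
    twist f.toLinearMap ρ (v * w) =
      mul' R E (TensorProduct.map (mulRight R (twist f.toLinearMap ρ w)) f.toLinearMap (ρ v)) := by
  have twist_map₂ (V W : E ⊗[R] H) : mul' R E (lTensor E f.toLinearMap
      (TensorProduct.map₂ (LinearMap.mul R E) (LinearMap.mul R H).flip V W)) =
        mul' R E (TensorProduct.map (mulRight R (mul' R E (lTensor E f.toLinearMap W)))
          f.toLinearMap V) := by
    induction V with
    | zero => simp
    | add V V' hV hV' => simp only [map_add, LinearMap.add_apply, hV, hV']
    | tmul v a =>
      induction W with
      | zero => simp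
      | add W W' hW hW' => simp_all [mul_add, add_mul]
      | tmul w b => simp [mul_assoc]
  exact congr(mul' R E (lTensor E f.toLinearMap $(hρ.map_mul v w))).trans (twist_map₂ (ρ v) (ρ w))

lemma IsInnerAction.sum_twist_mul (hA : IsInnerAction A f.toLinearMap ψ)
    (hψf : toConv ψ * toConv f.toLinearMap = 1)
    (hρ : IsCrossed ρ A (LinearMap.mul R H) (LinearMap.mul R H).flip) (h : H) (u : E) :
    ∑ i ∈ (ℛ R h).index, twist f.toLinearMap ρ (A ((ℛ R h).right i) u) * f ((ℛ R h).left i) =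
      f h * twist f.toLinearMap ρ u := by
  have crossed := congr(mul' R E (lTensor E f.toLinearMap $(hρ h u)))
  have left (W : E ⊗[R] H) (a : H) :
      mul' R E (lTensor E f.toLinearMap (lTensor E ((LinearMap.mul R H).flip a) W)) =
        mul' R E (lTensor E f.toLinearMap W) * f a := by
    induction W with
    | zero => simp
    | add W W' hW hW' => simp only [map_add, add_mul, hW, hW']
    | tmul w b => simp [mul_assoc]
  have right (W : E ⊗[R] H) : ∑ i ∈ (ℛ R h).index, mul' R E (lTensor E f.toLinearMap
      (TensorProduct.map (A ((ℛ R h).left i)) (LinearMap.mul R H ((ℛ R h).right i)) W)) =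
        f h * mul' R E (lTensor E f.toLinearMap W) := by
    induction W with
    | zero => simp
    | add W W' hW hW' => simp only [map_add, Finset.sum_add_distrib, mul_add, hW, hW']
    | tmul w b =>
      have inner := congr($(hA.sum_mul hψf h w) * f b)
      simpa [Finset.sum_mul, mul_assoc] using inner
  simp only [map_sum, left] at crossed
  exact crossed.trans (right (ρ u))

lemma IsInnerAction.op_twist (hA : IsInnerAction A f.toLinearMap ψ)
    (hψf : toConv ψ * toConv f.toLinearMap = 1)
    (hρ : IsCrossed ρ A (LinearMap.mul R H) (LinearMap.mul R H).flip)
    {A' : H →ₗ[R] Eᵐᵒᵖ →ₗ[R] Eᵐᵒᵖ} {χ : H →ₗ[R] Eᵐᵒᵖ}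
    (hA' : IsInnerAction A' χ ((opLinearEquiv R).toLinearMap ∘ₗ f.toLinearMap))
    (hχ : toConv χ * toConv ((opLinearEquiv R).toLinearMap ∘ₗ f.toLinearMap) = 1) (h : H) (u : E) :
    op (twist f.toLinearMap ρ (A h u)) = A' h (op (twist f.toLinearMap ρ u)) := by
  set fop := toConv ((opLinearEquiv R).toLinearMap ∘ₗ f.toLinearMap)
  set t := toConv ((opLinearEquiv R).toLinearMap ∘ₗ twist f.toLinearMap ρ ∘ₗ A.flip u)
  have commute : fop * t = constConv R H (op (twist f.toLinearMap ρ u)) * fop := by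
    ext1
    ext1 h
    have sum_twist := congrArg op (hA.sum_twist_mul hψf hρ h u)
    refine ((ℛ R h).convMul_apply _ _).trans (.trans ?_ (constConv_mul_apply _ _ h).symm)
    rw [Finset.op_sum] at sum_twist
    exact sum_twist
  have conv : t = toConv (A'.flip (op (twist f.toLinearMap ρ u))) := by
    rw [hA', mul_assoc, ← commute, ← mul_assoc, hχ, one_mul]
  exact congr($conv h)

lemma twist_mulRight_comp (φ : H →ₗ[R] E) (a u : E) :
    twist (mulRight R a ∘ₗ φ) ρ u = twist φ ρ u * a := by
  have mul'_lTensor (W : E ⊗[R] H) :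
      mul' R E (lTensor E (mulRight R a ∘ₗ φ) W) = mul' R E (lTensor E φ W) * a := by
    induction W with
    | zero => simp
    | add W W' hW hW' => simp only [map_add, add_mul, hW, hW']
    | tmul w b => simp [mul_assoc]
  exact mul'_lTensor (ρ u)

lemma IsOpComoduleAlgebra.twist_mul'_lTensor (hρ : IsOpComoduleAlgebra ρ) (f : H →ₐ[R] E)
    (B : H →ₗ[R] E) (W : E ⊗[R] H) :
    twist f.toLinearMap ρ (mul' R E (lTensor E B W)) =
      mul' R E (lTensor E (mul' R E ∘ₗ TensorProduct.map (twist f.toLinearMap ρ ∘ₗ B) f.toLinearMap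
        ∘ₗ (TensorProduct.comm R H H).toLinearMap)
          (TensorProduct.assoc R E H H (rTensor H ρ W))) := by
  induction W with
  | zero => simp
  | add W W' hW hW' => simp only [map_add, hW, hW']
  | tmul w b =>
    rw [lTensor_tmul, mul'_apply, hρ.twist_mul, rTensor_tmul]
    induction ρ w with
    | zero => simp
    | add V V' hV hV' => simp only [map_add, TensorProduct.add_tmul, hV, hV']
    | tmul v a => simp [mul_assoc]

lemma IsOpComoduleAlgebra.twist_twist (hρ : IsOpComoduleAlgebra ρ) (hρ' : IsComodule ρ)
    (f : H →ₐ[R] E) (B : H →ₗ[R] E) (v : E) :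
    twist f.toLinearMap ρ (twist B ρ v) =
      twist (mul' R E ∘ₗ TensorProduct.map (twist f.toLinearMap ρ ∘ₗ B) f.toLinearMap
        ∘ₗ (TensorProduct.comm R H H).toLinearMap ∘ₗ comul) ρ v := by
  refine (hρ.twist_mul'_lTensor f B (ρ v)).trans ?_
  rw [hρ'.coassoc, LinearEquiv.apply_symm_apply, ← lTensor_comp_apply]
  rfl

lemma IsInnerAction.twist_twist_flip (hA : IsInnerAction A f.toLinearMap ψ)
    (hψf : toConv ψ * toConv f.toLinearMap = 1)
    (hρ : IsCrossed ρ A (LinearMap.mul R H) (LinearMap.mul R H).flip) (hρ' : IsComodule ρ)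
    (hρ'' : IsOpComoduleAlgebra ρ) (u v : E) :
    twist f.toLinearMap ρ (twist (A.flip u) ρ v) =
      twist f.toLinearMap ρ v * twist f.toLinearMap ρ u := by
  rw [hρ''.twist_twist hρ', ← twist_mulRight_comp]
  refine congr(twist $(LinearMap.ext fun h ↦ ?_) ρ v)
  refine .trans ?_ (hA.sum_twist_mul hψf hρ h u)
  rw [comp_apply, comp_apply, comp_apply, ← (ℛ R h).eq]
  simp

end OpComoduleAlgebra

section EndAlgebra

variable {R H M : Type*} [CommSemiring R] [Semiring H] [Bialgebra R H] [Module.Free R H]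
  [AddCommMonoid M] [Module R M] {δ : M →ₗ[R] M ⊗[R] H}
  {ρ : Module.End R M →ₗ[R] Module.End R M ⊗[R] H} {θ : H →ₗ[R] Module.End R H}

lemma IsEndCoaction.isOpComoduleAlgebra (hδ : IsComodule δ) (hθ : Cancels θ (LinearMap.mul R H))
    (hρ : IsEndCoaction δ (LinearMap.mul R H) ρ) : IsOpComoduleAlgebra ρ where
  map_one := by
    refine hδ.contract_injective hθ ?_
    rw [hρ, contract_tmul]
    have one : (LinearMap.mul R H).flip 1 = LinearMap.id := LinearMap.ext mul_one
    simp [one, Module.End.one_eq_id]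
  map_mul u v := by
    refine hδ.contract_injective hθ ?_
    ext m
    rw [hρ, ← endMul_apply_coact, endMul_map₂]
    calc δ (u (v m)) = endMul R H M (ρ u) (δ (v m)) := congr($(hρ u) (v m)).symm
      _ = endMul R H M (ρ u) (endMul R H M (ρ v) (δ m)) :=
        congr(endMul R H M (ρ u) $(congr($(hρ v) m).symm))

end EndAlgebra

section Cancellation

variable {R H : Type*} [CommSemiring R] [Semiring H] [HopfAlgebra R H] {T : H →ₗ[R] H}

lemma IsSkewAntipode.cancels_mul (hT : IsSkewAntipode T) :
    Cancels (LinearMap.mul R H ∘ₗ T) (LinearMap.mul R H) := fun h x ↦ by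
  simp [← mul_assoc, ← Finset.sum_mul, hT.sum_mul_left, Algebra.smul_def]

lemma IsSkewAntipode.mul_cancels (hT : IsSkewAntipode T) :
    Cancels (LinearMap.mul R H) (LinearMap.mul R H ∘ₗ T) := fun h x ↦ by
  simp [← mul_assoc, ← Finset.sum_mul, hT.sum_right_mul, Algebra.smul_def]

variable (γ : H ≃ₐc[R] H)

lemma twistedMul_antipode_cancels :
    Cancels (twistedMul (γ : H →ₗ[R] H) ∘ₗ antipode R ∘ₗ (γ : H →ₗ[R] H))
      (twistedMul (γ.symm : H →ₗ[R] H)) := fun h x ↦ by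
  have antipode_eq := sum_mul_antipode_eq_algebraMap_counit ((ℛ R h).induced γ)
  simp only [Coalgebra.Repr.induced, Function.comp_apply] at antipode_eq
  simp [twistedMul, mul_assoc, ← Finset.mul_sum, antipode_eq, Algebra.smul_def, Algebra.commutes]

lemma twistedMul_cancels_antipode :
    Cancels (twistedMul (γ.symm : H →ₗ[R] H))
      (twistedMul (γ : H →ₗ[R] H) ∘ₗ antipode R ∘ₗ (γ : H →ₗ[R] H)) := fun h x ↦ by
  have antipode_eq := congr(γ.symm
    $(sum_antipode_mul_eq_algebraMap_counit ((ℛ R h).induced γ)))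
  simp only [Coalgebra.Repr.induced, Function.comp_apply, map_sum, map_mul,
    BialgEquiv.symm_apply_apply, CoalgHomClass.counit_comp_apply, Algebra.algebraMap_eq_smul_one,
    map_smul, map_one] at antipode_eq
  simp [twistedMul, mul_assoc, ← Finset.mul_sum, antipode_eq]

end Cancellation

section EndComodule

variable {R H M : Type*} [CommSemiring R] [Semiring H] [HopfAlgebra R H] [Module.Free R H]
  [AddCommMonoid M] [Module R M] {δ : M →ₗ[R] M ⊗[R] H} {T : H →ₗ[R] H}
  {ρ : Module.End R M →ₗ[R] Module.End R M ⊗[R] H}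

lemma IsEndCoaction.isComodule (hρ : IsEndCoaction δ (LinearMap.mul R H) ρ) (hδ : IsComodule δ)
    (hT : IsSkewAntipode T) : IsComodule ρ :=
  .of_isEndCoaction (T := Bialgebra.mulCoalgHom R H) hδ hT.cancels_mul hρ

lemma IsEndCoaction.isComodule_twisted {γ : H ≃ₐc[R] H}
    (hρ : IsEndCoaction δ (twistedMul (γ.symm : H →ₗ[R] H)) ρ) (hδ : IsComodule δ) :
    IsComodule ρ :=
  .of_isEndCoaction (T := (Bialgebra.mulCoalgHom R H).comp <|
    (Coalgebra.TensorProduct.map (γ.symm : H →ₗc[R] H) (.id R H)).comp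
      (Bialgebra.TensorProduct.comm R H H : H ⊗[R] H →ₗc[R] H ⊗[R] H))
    hδ (twistedMul_antipode_cancels γ) hρ

end EndComodule

section RestrictAction

variable {R H M : Type*} [CommSemiring R] [Semiring H] [HopfAlgebra R H]
  [AddCommMonoid M] [Module R M] {δ : M →ₗ[R] M ⊗[R] H} {T : H →ₗ[R] H}
  {φ : H →ₗ[R] Module.End R M}

lemma mulConv_mul_mulConv_skewAntipode (hT : IsSkewAntipode T) (α : H →ₐ[R] H) :
    mulConv M α.toLinearMap * mulConv M (α.toLinearMap ∘ₗ T) = 1 :=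
  hT.conv_comp_op (((Module.End.lTensorAlgHom R H M).comp (Algebra.lsmul R R H)).comp
    (AlgHom.op α))

lemma IsYetterDrinfeld.of_skewAntipode (hT : IsSkewAntipode T) {α β : H ≃ₐc[R] H}
    (h : constConv R H (coactMul δ) * actConv φ =
      mulConv M ((α : H →ₗ[R] H) ∘ₗ T) * actConv φ * constConv R H (coactMul δ) *
        mulConv M (β : H →ₗ[R] H)) :
    IsYetterDrinfeld (φ ∘ₗ (α.symm : H →ₗ[R] H)) δ ((β : H →ₗ[R] H) ∘ₗ (α.symm : H →ₗ[R] H)) := by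
  set r := constConv R H (coactMul δ) with hr
  have unit : mulConv M (α : H →ₗ[R] H) * mulConv M ((α : H →ₗ[R] H) ∘ₗ T) = 1 :=
    mulConv_mul_mulConv_skewAntipode hT (α : H →ₐ[R] H)
  have commute : mulConv M (α : H →ₗ[R] H) * r * actConv φ =
      actConv φ * r * mulConv M (β : H →ₗ[R] H) := by
    calc mulConv M (α : H →ₗ[R] H) * r * actConv φ
        = (mulConv M (α : H →ₗ[R] H) * mulConv M ((α : H →ₗ[R] H) ∘ₗ T)) *
            (actConv φ * r * mulConv M (β : H →ₗ[R] H)) := by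
          rw [mul_assoc, h]; simp only [mul_assoc]
      _ = actConv φ * r * mulConv M (β : H →ₗ[R] H) := by
          rw [unit, one_mul]
  let e : H →ₗc[R] H := α.symm
  have restrict := congr(($commute).ofConv ∘ₗ e.toLinearMap)
  simp only [convMul_comp_coalgHom_distrib] at restrict
  have const : r.ofConv ∘ₗ e.toLinearMap = r.ofConv := by
    ext1 h
    simp [hr, constConv, e]
  have cancel : toConv ((mulConv M (α : H →ₗ[R] H)).ofConv ∘ₗ e.toLinearMap) = mulConv M .id := by
    ext1
    ext1 h
    simp [mulConv, e]
  rw [const] at restrict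
  rw [IsYetterDrinfeld, ← cancel]
  exact congr(toConv $restrict)

end RestrictAction

section EndTwist

variable {R H M : Type*} [CommSemiring R] [Semiring H] [HopfAlgebra R H] [Module.Free R H]
  [AddCommMonoid M] [Module R M] {f : H →ₐ[R] Module.End R M} {δ : M →ₗ[R] M ⊗[R] H}
  {γ : H ≃ₐc[R] H} {T : H →ₗ[R] H} {ρ ρ' : Module.End R M →ₗ[R] Module.End R M ⊗[R] H}
  {A : H →ₗ[R] Module.End R M →ₗ[R] Module.End R M}

lemma IsYetterDrinfeld.comp_twist (h : IsYetterDrinfeld f.toLinearMap δ (γ.symm : H →ₗ[R] H))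
    (hδ : IsComodule δ) (hT : IsSkewAntipode T) (hρ : IsEndCoaction δ (LinearMap.mul R H) ρ)
    (hρ' : IsEndCoaction δ (twistedMul (γ.symm : H →ₗ[R] H)) ρ') :
    ρ' ∘ₗ twist f.toLinearMap ρ = rTensor H (twist f.toLinearMap ρ) ∘ₗ ρ :=
  h.isCrossed.comp_twist hδ (twistedMul_antipode_cancels γ) (hρ.isComodule hδ hT) hρ hρ'

lemma IsYetterDrinfeld.comp_twist_antipode
    (h : IsYetterDrinfeld f.toLinearMap δ (γ.symm : H →ₗ[R] H))
    (hδ : IsComodule δ) (hT : IsSkewAntipode T) (hρ : IsEndCoaction δ (LinearMap.mul R H) ρ)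
    (hρ' : IsEndCoaction δ (twistedMul (γ.symm : H →ₗ[R] H)) ρ') :
    ρ ∘ₗ twist (f.toLinearMap ∘ₗ antipode R) ρ' =
      rTensor H (twist (f.toLinearMap ∘ₗ antipode R) ρ') ∘ₗ ρ' :=
  (h.isCrossed_inverse (algHom_conv_antipode f) (antipode_conv_algHom f)).comp_twist hδ
    hT.cancels_mul (hρ'.isComodule_twisted hδ) hρ' hρ

lemma IsYetterDrinfeld.twist_antipode_twist
    (h : IsYetterDrinfeld f.toLinearMap δ (γ.symm : H →ₗ[R] H))
    (hδ : IsComodule δ) (hT : IsSkewAntipode T) (hρ : IsEndCoaction δ (LinearMap.mul R H) ρ)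
    (hρ' : IsEndCoaction δ (twistedMul (γ.symm : H →ₗ[R] H)) ρ') (u : Module.End R M) :
    twist (f.toLinearMap ∘ₗ antipode R) ρ' (twist f.toLinearMap ρ u) = u :=
  twist_twist (hρ.isComodule hδ hT) (algHom_conv_antipode f) (h.comp_twist hδ hT hρ hρ') u

lemma IsYetterDrinfeld.twist_twist_antipode
    (h : IsYetterDrinfeld f.toLinearMap δ (γ.symm : H →ₗ[R] H))
    (hδ : IsComodule δ) (hT : IsSkewAntipode T) (hρ : IsEndCoaction δ (LinearMap.mul R H) ρ)
    (hρ' : IsEndCoaction δ (twistedMul (γ.symm : H →ₗ[R] H)) ρ') (v : Module.End R M) :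
    twist f.toLinearMap ρ (twist (f.toLinearMap ∘ₗ antipode R) ρ' v) = v :=
  twist_twist (hρ'.isComodule_twisted hδ) (antipode_conv_algHom f)
    (h.comp_twist_antipode hδ hT hρ hρ') v

lemma IsYetterDrinfeld.isCrossed_endAction {g : H →ₗ[R] H}
    (h : IsYetterDrinfeld f.toLinearMap δ g) (hδ : IsComodule δ) (hT : IsSkewAntipode T)
    (hρ : IsEndCoaction δ (LinearMap.mul R H) ρ)
    (hA : IsInnerAction A f.toLinearMap (f.toLinearMap ∘ₗ antipode R)) :
    IsCrossed ρ A (LinearMap.mul R H) (LinearMap.mul R H).flip :=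
  h.isCrossed_innerAction (algHom_conv_antipode f) (antipode_conv_algHom f) hδ hT.cancels_mul hρ hA

lemma IsYetterDrinfeld.op_twist_apply {g : H →ₗ[R] H} (h : IsYetterDrinfeld f.toLinearMap δ g)
    (hδ : IsComodule δ) (hT : IsSkewAntipode T) (hρ : IsEndCoaction δ (LinearMap.mul R H) ρ)
    (hA : IsInnerAction A f.toLinearMap (f.toLinearMap ∘ₗ antipode R))
    {A' : H →ₗ[R] (Module.End R M)ᵐᵒᵖ →ₗ[R] (Module.End R M)ᵐᵒᵖ}
    (hA' : IsInnerAction A' ((opLinearEquiv R).toLinearMap ∘ₗ f.toLinearMap ∘ₗ T)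
      ((opLinearEquiv R).toLinearMap ∘ₗ f.toLinearMap)) (x : H) (u : Module.End R M) :
    op (twist f.toLinearMap ρ (A x u)) = A' x (op (twist f.toLinearMap ρ u)) :=
  hA.op_twist (antipode_conv_algHom f) (h.isCrossed_endAction hδ hT hρ hA) hA'
    (hT.comp_op_conv (AlgHom.op f)) x u

lemma IsYetterDrinfeld.twist_twist_flip {g : H →ₗ[R] H} (h : IsYetterDrinfeld f.toLinearMap δ g)
    (hδ : IsComodule δ) (hT : IsSkewAntipode T) (hρ : IsEndCoaction δ (LinearMap.mul R H) ρ)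
    (hA : IsInnerAction A f.toLinearMap (f.toLinearMap ∘ₗ antipode R)) (u v : Module.End R M) :
    twist f.toLinearMap ρ (twist (A.flip u) ρ v) =
      twist f.toLinearMap ρ v * twist f.toLinearMap ρ u :=
  hA.twist_twist_flip (antipode_conv_algHom f) (h.isCrossed_endAction hδ hT hρ hA)
    (hρ.isComodule hδ hT) (hρ.isOpComoduleAlgebra hδ hT.cancels_mul) u v

end EndTwist

section Representation

lemma exists_nat_bijOn {ι : Type*} [Nonempty ι] (s : Finset ι) :
    ∃ (t : Finset ℕ) (e : ℕ → ι), Set.BijOn e t s := by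
  classical
  obtain ⟨f, hf⟩ := (s : Set ι).countable_iff_exists_injOn.mp s.finite_toSet.countable
  refine ⟨s.image f, Function.invFunOn f s, ?_⟩
  rw [Finset.coe_image]
  exact hf.bijOn_image.symm ⟨hf.bijOn_image.surjOn.rightInvOn_invFunOn, hf.leftInvOn_invFunOn⟩

variable {R M N P : Type*} [CommSemiring R] [AddCommMonoid M] [Module R M]
  [AddCommMonoid N] [Module R N] [AddCommMonoid P] [Module R P]

lemma exists_nat_sum_tmul_eq (x : M ⊗[R] N) :
    ∃ (s : Finset ℕ) (m : ℕ → M) (n : ℕ → N), x = ∑ i ∈ s, m i ⊗ₜ n i := by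
  obtain ⟨S, rfl⟩ := TensorProduct.exists_finset x
  obtain ⟨t, e, he⟩ := exists_nat_bijOn S
  exact ⟨t, fun i ↦ (e i).1, fun i ↦ (e i).2,
    (Finset.sum_nbij e he.mapsTo he.injOn he.surjOn fun _ _ ↦ rfl).symm⟩

lemma exists_nat_sum_tmul_tmul_eq (x : (M ⊗[R] N) ⊗[R] P) :
    ∃ (s : Finset ℕ) (m : ℕ → M) (n : ℕ → N) (p : ℕ → P),
      x = ∑ i ∈ s, (m i ⊗ₜ n i) ⊗ₜ p i := by
  obtain ⟨s, y, p, rfl⟩ := exists_nat_sum_tmul_eq x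
  choose t m n hy using fun i ↦ exists_nat_sum_tmul_eq (y i)
  obtain ⟨u, e, he⟩ := exists_nat_bijOn (s.sigma t)
  refine ⟨u, fun i ↦ m (e i).1 (e i).2, fun i ↦ n (e i).1 (e i).2, fun i ↦ p (e i).1, ?_⟩
  rw [Finset.sum_nbij (g := fun i ↦ (m i.1 i.2 ⊗ₜ n i.1 i.2) ⊗ₜ p i.1) e he.mapsTo he.injOn
    he.surjOn fun _ _ ↦ rfl, Finset.sum_sigma]
  simp only [hy, TensorProduct.sum_tmul]

lemma exists_nat_repr [Coalgebra R M] (m : M) : Nonempty (Coalgebra.Repr R m ℕ) := by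
  obtain ⟨s, x, y, h⟩ := exists_nat_sum_tmul_eq (comul (R := R) m)
  exact ⟨⟨s, x, y, h.symm⟩⟩

end Representation

section Conversion

variable {k H M : Type} [Field k] [Ring H] [HopfAlgebra k H] [AddCommGroup M] [Module k M]

lemma exists_isSkewAntipode {Sinv : H → H} (hS : GYD.IsAntipodeInv k H Sinv) :
    ∃ T : H →ₗ[k] H, Sinv = T ∧ IsSkewAntipode T := by
  let S : H ≃ₗ[k] H :=
    .ofBijective (antipode k) ⟨Function.LeftInverse.injective hS.2, fun h ↦ ⟨_, hS.1 h⟩⟩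
  have Sinv_eq : Sinv = S.symm := funext fun h ↦ S.injective <|
    (hS.1 h).trans (S.apply_symm_apply h).symm
  exact ⟨S.symm, Sinv_eq, .of_inverse S.apply_symm_apply S.symm_apply_apply⟩

lemma exists_bialgEquiv {φ : H ≃ₗ[k] H} (hφ : GYD.IsHopfAut k H φ) :
    ∃ φ' : H ≃ₐc[k] H, φ = (φ'.toCoalgEquiv : H ≃ₗ[k] H) :=
  ⟨.ofAlgEquiv (.ofLinearEquiv φ hφ.2.1 hφ.1) (by ext h; exact hφ.2.2.2 h)
    (by ext h; exact (hφ.2.2.1 h).symm), rfl⟩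

variable {T : H →ₗ[k] H} {α β : H ≃ₐc[k] H} {actM : H →ₗ[k] M →ₗ[k] M}
  {coactM : M →ₗ[k] M ⊗[k] H}

lemma isComodule_of_isYD {Sinv α β : H → H} (hM : GYD.IsYD k H Sinv α β actM coactM) :
    IsComodule coactM where
  coassoc := hM.2.2.1
  lTensor_counit := hM.2.2.2.1

lemma coactMul_mul_actConv (hM : GYD.IsYD k H T α β actM coactM) :
    constConv k H (coactMul coactM) * actConv actM =
      mulConv M ((α : H →ₗ[k] H) ∘ₗ T) * actConv actM * constConv k H (coactMul coactM) *
        mulConv M (β : H →ₗ[k] H) := by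
  ext1
  ext1 h
  obtain ⟨s, a, b, c, hs⟩ := exists_nat_sum_tmul_tmul_eq (rTensor H comul (comul (R := k) h))
  refine (constConv_mul_apply _ _ h).trans (TensorProduct.ext' fun m x ↦ ?_)
  obtain ⟨t, m₀, m₁, ht⟩ := exists_nat_sum_tmul_eq (coactM m)
  have compatible := congr(lTensor M (LinearMap.mul k H x) $(hM.2.2.2.2 h m s t a b c m₀ m₁ hs ht))
  rw [mul_assoc (mulConv M ((α : H →ₗ[k] H) ∘ₗ T))]
  rw [conv_mul_conv_mul_apply _ _ _ hs]
  simp only [mul_constConv_apply]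
  simpa [actConv, mulConv, coactMul_tmul, ht, mul_assoc] using compatible

variable {θ : H →ₗ[k] Module.End k H}

lemma homTensor_eq_convAct (u : Module.End k M) (W : Module.End k M ⊗[k] H)
    (hW : ∀ (m : M) (t : Finset ℕ) (m₀ : ℕ → M) (m₁ : ℕ → H) (r : ℕ → Finset ℕ)
      (n₀ : ℕ → ℕ → M) (n₁ : ℕ → ℕ → H), coactM m = ∑ j ∈ t, m₀ j ⊗ₜ m₁ j →
      (∀ j ∈ t, coactM (u (m₀ j)) = ∑ l ∈ r j, n₀ j l ⊗ₜ n₁ j l) →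
      rTensor H (applyₗ m) W = ∑ j ∈ t, ∑ l ∈ r j, n₀ j l ⊗ₜ θ (m₁ j) (n₁ j l)) :
    rTensorHomToHomRTensor (.id k) M M H W =
      convAct coactM (lTensorHom M ∘ₗ θ) (coactM ∘ₗ u) := by
  ext m
  have apply_eq (V : Module.End k M ⊗[k] H) :
      rTensorHomToHomRTensor (.id k) M M H V m = rTensor H (applyₗ m) V := by
    induction V with
    | zero => simp
    | tmul w c => simp
    | add V V' hV hV' => simp only [map_add, LinearMap.add_apply, hV, hV']
  obtain ⟨t, m₀, m₁, ht⟩ := exists_nat_sum_tmul_eq (coactM m)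
  choose r n₀ n₁ hr using fun j ↦ exists_nat_sum_tmul_eq (coactM (u (m₀ j)))
  rw [apply_eq, hW m t m₀ m₁ r n₀ n₁ ht fun j _ ↦ hr j]
  simp [convAct, ht, hr]

variable {coactE : Module.End k M →ₗ[k] Module.End k M ⊗[k] H}
  {coactO : (Module.End k M)ᵐᵒᵖ →ₗ[k] (Module.End k M)ᵐᵒᵖ ⊗[k] H}

lemma isEndCoaction_of_endCoactChar (hδ : IsComodule coactM) (hT : IsSkewAntipode T)
    (hE : GYD.EndCoactChar k H T coactM coactE) :
    IsEndCoaction coactM (LinearMap.mul k H) coactE :=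
  hδ.isEndCoaction_of_convAct hT.mul_cancels fun u ↦ homTensor_eq_convAct u _ <| hE u

/-- The coaction on `End(M)ᵒᵖ`, viewed as a coaction on the same space `End(M)`. -/
def unopCoaction (coactO : (Module.End k M)ᵐᵒᵖ →ₗ[k] (Module.End k M)ᵐᵒᵖ ⊗[k] H) :
    Module.End k M →ₗ[k] Module.End k M ⊗[k] H :=
  rTensor H (opLinearEquiv k).symm.toLinearMap ∘ₗ coactO ∘ₗ (opLinearEquiv k).toLinearMap

lemma coact_op_eq_rTensor {f : Module.End k M →ₗ[k] Module.End k M}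
    (hf : unopCoaction coactO ∘ₗ f = rTensor H f ∘ₗ coactE) (u : Module.End k M) :
    coactO (op (f u)) = rTensor H ((opLinearEquiv k).toLinearMap ∘ₗ f) (coactE u) := by
  rw [rTensor_comp_apply, ← comp_apply (rTensor H f), ← hf]
  simp [unopCoaction, ← rTensor_comp_apply]

lemma isEndCoaction_of_endOpCoactChar {γ : H ≃ₐc[k] H} (hδ : IsComodule coactM)
    (hO : GYD.EndOpCoactChar k H (lTensor M (γ : H →ₗ[k] H) ∘ₗ coactM) coactO) :
    IsEndCoaction coactM (twistedMul (γ.symm : H →ₗ[k] H)) (unopCoaction coactO) := by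
  refine hδ.isEndCoaction_of_convAct (twistedMul_cancels_antipode γ) fun u ↦
    homTensor_eq_convAct u _ fun m t m₀ m₁ r n₀ n₁ hm hr ↦ ?_
  have char := hO (op u) m t m₀ (fun j ↦ γ (m₁ j)) r n₀ (fun j l ↦ γ (n₁ j l))
    (by simp [hm]) (fun j hj ↦ by simp [hr j hj])
  rw [rTensor_comp_apply] at char
  simpa [twistedMul, unopCoaction] using char

/-- The action of `H` on an `(α, β)`-Yetter-Drinfeld module, pulled back along `α⁻¹`. -/
def pulledAction (hM : GYD.IsYD k H T α β actM coactM) : H →ₐ[k] Module.End k M :=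
  .ofLinearMap (actM ∘ₗ (α.symm : H →ₗ[k] H)) (LinearMap.ext fun m ↦ by simp [hM.1])
    fun g h ↦ LinearMap.ext fun m ↦ by simp [hM.2.1]

variable {actE : H →ₗ[k] Module.End k M →ₗ[k] Module.End k M}
  {actO : H →ₗ[k] (Module.End k M)ᵐᵒᵖ →ₗ[k] (Module.End k M)ᵐᵒᵖ}

lemma isInnerAction_of_endActChar (hM : GYD.IsYD k H T α β actM coactM)
    (hE : GYD.EndActChar k H α.symm actM actE) :
    IsInnerAction actE (pulledAction hM).toLinearMap
      ((pulledAction hM).toLinearMap ∘ₗ antipode k) := fun u ↦ by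
  ext h m
  obtain ⟨r⟩ := exists_nat_repr (R := k) h
  rw [conv_mul_constConv_mul_apply _ _ _ r]
  simpa [pulledAction, mul_assoc] using hE h u m r.index r.left r.right r.eq.symm

lemma isInnerAction_of_endOpActChar (hM : GYD.IsYD k H T α β actM coactM)
    (hO : GYD.EndOpActChar k H α.symm T actM actO) :
    IsInnerAction actO ((opLinearEquiv k).toLinearMap ∘ₗ (pulledAction hM).toLinearMap ∘ₗ T)
      ((opLinearEquiv k).toLinearMap ∘ₗ (pulledAction hM).toLinearMap) := fun u ↦ by
  ext1
  ext1 h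
  obtain ⟨r⟩ := exists_nat_repr (R := k) h
  rw [conv_mul_constConv_mul_apply _ _ _ r]
  refine unop_injective <| LinearMap.ext fun m ↦ ?_
  simpa [pulledAction, mul_assoc] using hO h u m r.index r.left r.right r.eq.symm

lemma isYetterDrinfeld_of_isYD (hT : IsSkewAntipode T) (hM : GYD.IsYD k H T α β actM coactM) :
    IsYetterDrinfeld (pulledAction hM).toLinearMap coactM
      ((β.symm.trans α).symm : H →ₗ[k] H) :=
  .of_skewAntipode hT (coactMul_mul_actConv hM)

lemma eq_op_twist {τ : Module.End k M →ₗ[k] (Module.End k M)ᵐᵒᵖ}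
    (hM : GYD.IsYD k H T α β actM coactM)
    (hτ : ∀ (u : Module.End k M) (m : M) (t : Finset ℕ) (u₀ : ℕ → Module.End k M) (u₁ : ℕ → H),
      coactE u = ∑ j ∈ t, u₀ j ⊗ₜ[k] u₁ j →
      (τ u).unop m = ∑ j ∈ t, u₀ j (actM (α.symm (u₁ j)) m)) :
    τ = (opLinearEquiv k).toLinearMap ∘ₗ twist (pulledAction hM).toLinearMap coactE := by
  refine LinearMap.ext fun u ↦ unop_injective <| LinearMap.ext fun m ↦ ?_
  obtain ⟨t, u₀, u₁, hu⟩ := exists_nat_sum_tmul_eq (coactE u)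
  simp [hτ u m t u₀ u₁ hu, twist, hu, pulledAction]

lemma eq_twist_unop {σ : (Module.End k M)ᵐᵒᵖ →ₗ[k] Module.End k M}
    (hM : GYD.IsYD k H T α β actM coactM)
    (hσ : ∀ (v : (Module.End k M)ᵐᵒᵖ) (m : M) (t : Finset ℕ)
      (v₀ : ℕ → (Module.End k M)ᵐᵒᵖ) (v₁ : ℕ → H),
      coactO v = ∑ j ∈ t, v₀ j ⊗ₜ[k] v₁ j →
      σ v m = ∑ j ∈ t, (v₀ j).unop (actM (α.symm (antipode k (v₁ j))) m)) :
    σ = twist ((pulledAction hM).toLinearMap ∘ₗ antipode k) (unopCoaction coactO) ∘ₗ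
      (opLinearEquiv k).symm.toLinearMap := by
  ext v m
  obtain ⟨t, v₀, v₁, hv⟩ := exists_nat_sum_tmul_eq (coactO v)
  simp [hσ v m t v₀ v₁ hv, twist, unopCoaction, hv, pulledAction]

end Conversion

end YetterDrinfeld

open YetterDrinfeld in
theorem statement_14_general
    (k H : Type) [Field k] [Ring H] [HopfAlgebra k H]
    (Sinv : H → H) (hS : GYD.IsAntipodeInv k H Sinv)
    (α β : H ≃ₗ[k] H)
    (hα : GYD.IsHopfAut k H α) (hβ : GYD.IsHopfAut k H β)
    (M : Type) [AddCommGroup M] [Module k M]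
    (actM : H →ₗ[k] M →ₗ[k] M) (coactM : M →ₗ[k] M ⊗[k] H)
    (hM : GYD.IsYD k H Sinv ⇑α ⇑β actM coactM)
    (actE : H →ₗ[k] Module.End k M →ₗ[k] Module.End k M)
    (coactE : Module.End k M →ₗ[k] Module.End k M ⊗[k] H)
    (hactE : GYD.EndActChar k H ⇑α.symm actM actE)
    (hcoactE : GYD.EndCoactChar k H Sinv coactM coactE)
    (actO : H →ₗ[k] (Module.End k M)ᵐᵒᵖ →ₗ[k] (Module.End k M)ᵐᵒᵖ)
    (coactO : (Module.End k M)ᵐᵒᵖ →ₗ[k] (Module.End k M)ᵐᵒᵖ ⊗[k] H)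
    (hactO : GYD.EndOpActChar k H ⇑α.symm Sinv actM actO)
    (hcoactO : GYD.EndOpCoactChar k H
      ((LinearMap.lTensor M (β.symm.trans α).toLinearMap) ∘ₗ coactM) coactO)
    (τ : Module.End k M →ₗ[k] (Module.End k M)ᵐᵒᵖ)
    (hτ : ∀ (u : Module.End k M) (m : M) (t : Finset ℕ)
        (u₀ : ℕ → Module.End k M) (u₁ : ℕ → H),
        coactE u = ∑ j ∈ t, u₀ j ⊗ₜ[k] u₁ j →
        (τ u).unop m = ∑ j ∈ t, u₀ j (actM (α.symm (u₁ j)) m))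
    (σ : (Module.End k M)ᵐᵒᵖ →ₗ[k] Module.End k M)
    (hσ : ∀ (v : (Module.End k M)ᵐᵒᵖ) (m : M) (t : Finset ℕ)
        (v₀ : ℕ → (Module.End k M)ᵐᵒᵖ) (v₁ : ℕ → H),
        coactO v = ∑ j ∈ t, v₀ j ⊗ₜ[k] v₁ j →
        σ v m = ∑ j ∈ t, (v₀ j).unop
          (actM (α.symm (HopfAlgebra.antipode (R := k) (v₁ j))) m)) :
    Function.Bijective τ ∧
    (∀ (u v : Module.End k M) (t : Finset ℕ) (v₀ : ℕ → Module.End k M) (v₁ : ℕ → H),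
        coactE v = ∑ j ∈ t, v₀ j ⊗ₜ[k] v₁ j →
        τ (∑ j ∈ t, v₀ j * actE (v₁ j) u) = τ u * τ v) ∧
    τ 1 = 1 ∧
    (∀ (h : H) (u : Module.End k M), τ (actE h u) = actO h (τ u)) ∧
    (∀ u : Module.End k M, coactO (τ u) = LinearMap.rTensor H τ (coactE u)) ∧
    (∀ u : Module.End k M, σ (τ u) = u) ∧
    (∀ v : (Module.End k M)ᵐᵒᵖ, τ (σ v) = v) := by
  obtain ⟨T, rfl, hT⟩ := exists_isSkewAntipode hS
  obtain ⟨α, rfl⟩ := exists_bialgEquiv hα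
  obtain ⟨β, rfl⟩ := exists_bialgEquiv hβ
  have hδ := isComodule_of_isYD hM
  have hYD := isYetterDrinfeld_of_isYD hT hM
  have hρ := isEndCoaction_of_endCoactChar hδ hT hcoactE
  have hρ' := isEndCoaction_of_endOpCoactChar (γ := β.symm.trans α) hδ hcoactO
  have hA := isInnerAction_of_endActChar hM hactE
  have hA' := isInnerAction_of_endOpActChar hM hactO
  have hτ := eq_op_twist hM hτ
  have hσ := eq_twist_unop hM hσ
  have left_inv : Function.LeftInverse σ τ := by
    rw [hτ, hσ]
    exact hYD.twist_antipode_twist hδ hT hρ hρ'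
  have right_inv : Function.RightInverse σ τ := by
    rw [hτ, hσ]
    exact fun v ↦ congrArg MulOpposite.op (hYD.twist_twist_antipode hδ hT hρ hρ' v.unop)
  refine ⟨⟨left_inv.injective, right_inv.surjective⟩, fun u v t v₀ v₁ hv ↦ ?_, ?_, ?_, ?_,
    left_inv, right_inv⟩ <;> rw [hτ]
  · simpa [twist, hv] using congrArg MulOpposite.op (hYD.twist_twist_flip hδ hT hρ hA u v)
  · exact congrArg MulOpposite.op ((hρ.isOpComoduleAlgebra hδ hT.cancels_mul).twist_one _)
  · exact hYD.op_twist_apply hδ hT hρ hA hA'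
  · exact coact_op_eq_rTensor (hYD.comp_twist hδ hT hρ hρ')

theorem statement_14
    (k H : Type) [Field k] [Ring H] [HopfAlgebra k H]
    (Sinv : H → H) (hS : GYD.IsAntipodeInv k H Sinv)
    (α β : H ≃ₗ[k] H)
    (hα : GYD.IsHopfAut k H α) (hβ : GYD.IsHopfAut k H β)
    (M : Type) [AddCommGroup M] [Module k M] [FiniteDimensional k M]
    (actM : H →ₗ[k] M →ₗ[k] M) (coactM : M →ₗ[k] M ⊗[k] H)
    (hM : GYD.IsYD k H Sinv ⇑α ⇑β actM coactM)
    -- End(M) with its Yetter-Drinfeld algebra structure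
    (actE : H →ₗ[k] Module.End k M →ₗ[k] Module.End k M)
    (coactE : Module.End k M →ₗ[k] Module.End k M ⊗[k] H)
    (hactE : GYD.EndActChar k H ⇑α.symm actM actE)
    (hcoactE : GYD.EndCoactChar k H Sinv coactM coactE)
    -- End(M')^op, where M' is the (αβ⁻¹α, α)-Yetter-Drinfeld module with coaction
    -- m ↦ m₍₀₎ ⊗ αβ⁻¹(m₍₁₎)
    (actO : H →ₗ[k] (Module.End k M)ᵐᵒᵖ →ₗ[k] (Module.End k M)ᵐᵒᵖ)
    (coactO : (Module.End k M)ᵐᵒᵖ →ₗ[k] (Module.End k M)ᵐᵒᵖ ⊗[k] H)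
    (hactO : GYD.EndOpActChar k H ⇑α.symm Sinv actM actO)
    (hcoactO : GYD.EndOpCoactChar k H
      ((LinearMap.lTensor M (β.symm.trans α).toLinearMap) ∘ₗ coactM) coactO)
    -- the map τ : End(M)-bar → End(M')^op, τ(u)(m) = u₍₀₎(α⁻¹(u₍₁₎)·m)
    (τ : Module.End k M →ₗ[k] (Module.End k M)ᵐᵒᵖ)
    (hτ : ∀ (u : Module.End k M) (m : M) (t : Finset ℕ)
        (u₀ : ℕ → Module.End k M) (u₁ : ℕ → H),
        coactE u = ∑ j ∈ t, u₀ j ⊗ₜ[k] u₁ j →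
        (τ u).unop m = ∑ j ∈ t, u₀ j (actM (α.symm (u₁ j)) m))
    -- the map τ⁻¹(v)(m) = v₍₀₎(α⁻¹(S(v₍₁₎))·m)
    (σ : (Module.End k M)ᵐᵒᵖ →ₗ[k] Module.End k M)
    (hσ : ∀ (v : (Module.End k M)ᵐᵒᵖ) (m : M) (t : Finset ℕ)
        (v₀ : ℕ → (Module.End k M)ᵐᵒᵖ) (v₁ : ℕ → H),
        coactO v = ∑ j ∈ t, v₀ j ⊗ₜ[k] v₁ j →
        σ v m = ∑ j ∈ t, (v₀ j).unop
          (actM (α.symm (HopfAlgebra.antipode (R := k) (v₁ j))) m)) :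
    Function.Bijective τ ∧
    -- τ is multiplicative from the H-opposite of End(M) to End(M')^op:
    -- τ(u * v) = τ(u)τ(v), where u * v = v₍₀₎ ∘ (v₍₁₎ · u)
    (∀ (u v : Module.End k M) (t : Finset ℕ) (v₀ : ℕ → Module.End k M) (v₁ : ℕ → H),
        coactE v = ∑ j ∈ t, v₀ j ⊗ₜ[k] v₁ j →
        τ (∑ j ∈ t, v₀ j * actE (v₁ j) u) = τ u * τ v) ∧
    τ 1 = 1 ∧
    -- τ is H-linear
    (∀ (h : H) (u : Module.End k M), τ (actE h u) = actO h (τ u)) ∧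
    -- τ is H-colinear
    (∀ u : Module.End k M, coactO (τ u) = LinearMap.rTensor H τ (coactE u)) ∧
    -- σ is a two-sided inverse for τ
    (∀ u : Module.End k M, σ (τ u) = u) ∧
    (∀ v : (Module.End k M)ᵐᵒᵖ, τ (σ v) = v) :=
  statement_14_general k H Sinv hS α β hα hβ M actM coactM hM actE coactE hactE hcoactE
    actO coactO hactO hcoactO τ hτ σ hσ

end
end

section
/- Let M be a finite-dimensional (α,β)-Yetter-Drinfeld module and N a finite-dimensional (γ,δ)-Yetter-Drinfeld module. Then the map φ : End(M) # End(N) → End(M ⊗̂ N), defined by φ(u # v)(m⊗n) = u(m₍₀₎) ⊗ (m₍₁₎·v)(n), where m₍₁₎·v refers to the left H-action on End(N), is an isomorphism of algebras in _H𝒴𝒟^H (a bijective algebra map which is H-linear and H-colinear). -/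
open TensorProduct

noncomputable section

/-!
Let `ρ` be the action of `N` twisted by `γ⁻¹`. Since `H` has an antipode, the operator
`W : m ⊗ n ↦ m₍₀₎ ⊗ ρ(m₍₁₎)(n)` is invertible, and `φ(u ⊗ v) = (u ⊗ 1) W (1 ⊗ v) W⁻¹`.
Likewise the `H`-actions on the algebras `End` are conjugations by units of a convolution algebra,
and the coactions are conjugations by operators `m ⊗ y ↦ m₍₀₎ ⊗ y m₍₁₎`. The Yetter-Drinfeld
condition becomes a relation `A B W = W C d` between such units, in which `B` commutes with `u ⊗ 1`
and `d` with `1 ⊗ v`. Conjugating `φ(u ⊗ v)` by `A B` then gives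
`(A (u ⊗ 1) A⁻¹) W (C (1 ⊗ v) C⁻¹) W⁻¹`, which is `H`-linearity for the condition on `M` and
`H`-colinearity for the condition on `N`. Bijectivity follows from injectivity by counting
dimensions, and injectivity from the invertibility of `W` and of `m ⊗ y ↦ m₍₀₎ ⊗ y m₍₁₎`.
-/

namespace GYD

open LinearMap WithConv Coalgebra HopfAlgebra MulOpposite

section Convolution

variable {R C A B : Type*} [CommSemiring R] [Semiring A] [Algebra R A] [Semiring B] [Algebra R B]

section Coalgebra

variable [AddCommMonoid C] [Module R C] [Coalgebra R C]

lemma convMul_apply_of_comul_eq {ι : Type*} (f g : WithConv (C →ₗ[R] A)) {c : C} {s : Finset ι}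
    {x y : ι → C} (h : comul (R := R) c = ∑ i ∈ s, x i ⊗ₜ[R] y i) :
    (f * g) c = ∑ i ∈ s, f (x i) * g (y i) := by
  simp [h]

lemma convMul_convMul_apply_of_comul_eq {ι : Type*} (f g l : WithConv (C →ₗ[R] A)) {c : C}
    {s : Finset ι} {x y z : ι → C}
    (h : rTensor C comul (comul (R := R) c) = ∑ i ∈ s, (x i ⊗ₜ[R] y i) ⊗ₜ[R] z i) :
    (f * g * l) c = ∑ i ∈ s, f (x i) * g (y i) * l (z i) := by
  have hfg : TensorProduct.map (f * g).ofConv l.ofConv =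
      TensorProduct.map (mul' R A ∘ₗ TensorProduct.map f.ofConv g.ofConv) l.ofConv ∘ₗ
        rTensor C comul := by
    ext; simp
  rw [convMul_apply, hfg, comp_apply, h]
  simp

lemma toSpanSingleton_comp_counit_convMul (a : A) (f : WithConv (C →ₗ[R] A)) :
    toConv (toSpanSingleton R A a ∘ₗ counit) * f = toConv (mulLeft R a ∘ₗ f.ofConv) := by
  ext c
  have h := congr(a * $(one_mul f) c)
  rw [(ℛ R c).convMul_apply, Finset.mul_sum] at h
  simpa [(ℛ R c).convMul_apply, Algebra.algebraMap_eq_smul_one] using h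

lemma convMul_toSpanSingleton_comp_counit (a : A) (f : WithConv (C →ₗ[R] A)) :
    f * toConv (toSpanSingleton R A a ∘ₗ counit) = toConv (mulRight R a ∘ₗ f.ofConv) := by
  ext c
  have h := congr($(mul_one f) c * a)
  rw [(ℛ R c).convMul_apply, Finset.sum_mul] at h
  simpa [(ℛ R c).convMul_apply, Algebra.algebraMap_eq_smul_one] using h

/-- The embedding `a ↦ ε(·) a` of an algebra into its convolution algebra. -/
def convConst : A →* WithConv (C →ₗ[R] A) where
  toFun a := toConv (toSpanSingleton R A a ∘ₗ counit)
  map_one' := by ext c; simp [Algebra.algebraMap_eq_smul_one]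
  map_mul' a b := by
    rw [toSpanSingleton_comp_counit_convMul]
    ext c
    simp

lemma convConst_apply (a : A) (c : C) :
    (convConst a : WithConv (C →ₗ[R] A)) c = counit (R := R) c • a := rfl

lemma convConst_mul_apply (a : A) (f : WithConv (C →ₗ[R] A)) (c : C) :
    (convConst a * f : WithConv (C →ₗ[R] A)) c = a * f c :=
  congr($(toSpanSingleton_comp_counit_convMul a f) c)

lemma mul_convConst_apply (a : A) (f : WithConv (C →ₗ[R] A)) (c : C) :
    (f * convConst a : WithConv (C →ₗ[R] A)) c = f c * a :=
  congr($(convMul_toSpanSingleton_comp_counit a f) c)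

end Coalgebra

section HopfAlgebra

variable [Semiring C] [HopfAlgebra R C]

/-- The unit of the convolution algebra given by an algebra map `f` out of a Hopf algebra: its
inverse is `f ∘ S`. -/
def convUnit (f : C →ₐ[R] A) : (WithConv (C →ₗ[R] A))ˣ where
  val := toConv f.toLinearMap
  inv := toConv (f.toLinearMap ∘ₗ antipode R)
  val_inv := by
    ext c
    simp [(ℛ R c).convMul_apply, ← map_mul, ← map_sum, sum_mul_antipode_eq_algebraMap_counit,
      -convMul_apply]
  inv_val := by
    ext c
    simp [(ℛ R c).convMul_apply, ← map_mul, ← map_sum, sum_antipode_mul_eq_algebraMap_counit,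
      -convMul_apply]

@[simp]
lemma convUnit_apply (f : C →ₐ[R] A) (c : C) : (convUnit f).val c = f c := rfl

lemma map_antipode {D : Type*} [Semiring D] [HopfAlgebra R D] (f : C →ₐc[R] D) (c : C) :
    f (antipode R c) = antipode R (f c) := by
  have h : (convUnit (f : C →ₐ[R] D)).val *
      toConv (antipode R ∘ₗ f.toCoalgHom.toLinearMap) = 1 := by
    ext c
    have hf := congr($(convMul_comp_coalgHom_distrib (toConv .id) (toConv (antipode R))
      f.toCoalgHom) c)
    rw [id_mul_antipode] at hf
    refine hf.symm.trans ?_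
    simp
  exact congr($(Units.inv_eq_of_mul_eq_one_right h) c)

lemma sum_antipode_symm_mul_eq_algebraMap_counit (hS : Function.Bijective (antipode R (A := C)))
    {c : C} {ι : Type*} (r : Coalgebra.Repr R c ι) :
    ∑ i ∈ r.index, (LinearEquiv.ofBijective (antipode R) hS).symm (r.right i) * r.left i =
      algebraMap R C (counit c) := by
  apply hS.injective
  simp [antipode_mul_antidistrib, sum_antipode_mul_eq_algebraMap_counit,
    Algebra.algebraMap_eq_smul_one]

lemma sum_mul_antipode_symm_eq_algebraMap_counit (hS : Function.Bijective (antipode R (A := C)))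
    {c : C} {ι : Type*} (r : Coalgebra.Repr R c ι) :
    ∑ i ∈ r.index, r.right i * (LinearEquiv.ofBijective (antipode R) hS).symm (r.left i) =
      algebraMap R C (counit c) := by
  apply hS.injective
  simp [antipode_mul_antidistrib, sum_mul_antipode_eq_algebraMap_counit,
    Algebra.algebraMap_eq_smul_one]

/-- The unit of the convolution algebra given by an anti-multiplicative map `f` out of a Hopf
algebra with bijective antipode `S`: its inverse is `f ∘ S⁻¹`. -/
def opConvUnit (hS : Function.Bijective (antipode R (A := C))) (f : Cᵐᵒᵖ →ₐ[R] A) :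
    (WithConv (C →ₗ[R] A))ˣ where
  val := toConv (f.toLinearMap ∘ₗ (opLinearEquiv R).toLinearMap)
  inv := toConv (f.toLinearMap ∘ₗ (opLinearEquiv R).toLinearMap ∘ₗ
    (LinearEquiv.ofBijective (antipode R) hS).symm.toLinearMap)
  val_inv := by
    ext c
    simp [(ℛ R c).convMul_apply, ← map_mul, ← map_sum, ← op_mul, ← Finset.op_sum,
      sum_antipode_symm_mul_eq_algebraMap_counit hS, ← MulOpposite.algebraMap_apply,
      -convMul_apply]
  inv_val := by
    ext c
    simp [(ℛ R c).convMul_apply, ← map_mul, ← map_sum, ← op_mul, ← Finset.op_sum,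
      sum_mul_antipode_symm_eq_algebraMap_counit hS, ← MulOpposite.algebraMap_apply,
      -convMul_apply]

@[simp]
lemma opConvUnit_apply (hS : Function.Bijective (antipode R (A := C))) (f : Cᵐᵒᵖ →ₐ[R] A)
    (c : C) : (opConvUnit hS f).val c = f (op c) := rfl

lemma opConvUnit_inv_apply (hS : Function.Bijective (antipode R (A := C))) (f : Cᵐᵒᵖ →ₐ[R] A)
    (c : C) : (opConvUnit hS f)⁻¹.val c =
      f (op ((LinearEquiv.ofBijective (antipode R) hS).symm c)) := rfl

lemma opConvUnit_inv_mul (hS : Function.Bijective (antipode R (A := C))) (f : Cᵐᵒᵖ →ₐ[R] A)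
    (c d : C) :
    (opConvUnit hS f)⁻¹.val (c * d) = (opConvUnit hS f)⁻¹.val c * (opConvUnit hS f)⁻¹.val d := by
  have h : (LinearEquiv.ofBijective (antipode R) hS).symm (c * d) =
      (LinearEquiv.ofBijective (antipode R) hS).symm d *
        (LinearEquiv.ofBijective (antipode R) hS).symm c := by
    apply hS.injective
    simp [antipode_mul_antidistrib]
  simp only [opConvUnit_inv_apply, h, op_mul, map_mul]

/-- The adjoint action `c • a = f(c₁) a f(S c₂)` of a Hopf algebra `C` on an algebra `A` along an
algebra map `f : C → A`. -/
def adjointAction (f : C →ₐ[R] A) : C →ₐ[R] Module.End R A :=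
  (AlgHom.mulLeftRight R A).comp ((Algebra.TensorProduct.map f
    ((AlgHom.op f).comp (antipodeAlgHomOp R C))).comp (Bialgebra.comulAlgHom R C))

lemma toConv_adjointAction (f : C →ₐ[R] A) (a : A) :
    toConv ((adjointAction f).toLinearMap.flip a) =
      ((convUnit f).val * convConst a * (convUnit f)⁻¹.val : WithConv (C →ₗ[R] A)) := by
  ext c
  rw [(ℛ R c).convMul_apply]
  simp only [mul_convConst_apply]
  simp [adjointAction, ← (ℛ R c).eq, convUnit]

lemma map_adjointAction (f : C →ₐ[R] A) (j : A →ₐ[R] B) (c : C) (a : A) :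
    j (adjointAction f c a) = adjointAction (j.comp f) c (j a) := by
  simp [adjointAction, ← (ℛ R c).eq]

end HopfAlgebra

end Convolution

section Comodule

variable {R C M Q : Type*} [CommSemiring R] [AddCommMonoid C] [Module R C]
  [AddCommMonoid M] [Module R M] [AddCommMonoid Q] [Module R Q]

/-- `coact` makes `M` a right comodule over the coalgebra `C`. -/
structure IsComodule [Coalgebra R C] (coact : M →ₗ[R] M ⊗[R] C) : Prop where
  coassoc (m : M) : rTensor C coact (coact m) =
    (TensorProduct.assoc R M C C).symm (lTensor M comul (coact m))
  counit (m : M) : TensorProduct.rid R M (lTensor M counit (coact m)) = m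

/-- The endomorphism `m ⊗ q ↦ m₍₀₎ ⊗ f(m₍₁₎)(q)` attached to a coaction on `M` and a linear map
`f : C → End Q`. -/
def coactTwist (coact : M →ₗ[R] M ⊗[R] C) (f : C →ₗ[R] Module.End R Q) :
    Module.End R (M ⊗[R] Q) :=
  lTensor M (TensorProduct.lift f) ∘ₗ (TensorProduct.assoc R M C Q).toLinearMap ∘ₗ
    rTensor Q coact

lemma coactTwist_tmul (coact : M →ₗ[R] M ⊗[R] C) (f : C →ₗ[R] Module.End R Q) (m : M) (q : Q) :
    coactTwist coact f (m ⊗ₜ q) = lTensor M (f.flip q) (coact m) := by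
  simp only [coactTwist, coe_comp, LinearEquiv.coe_coe, Function.comp_apply, rTensor_tmul]
  induction coact m with
  | zero => simp
  | add x y hx hy => rw [add_tmul, map_add, map_add, hx, hy, map_add]
  | tmul m c => simp

variable [Coalgebra R C] {coact : M →ₗ[R] M ⊗[R] C}

lemma coactTwist_convConst (h : IsComodule coact) (v : Module.End R Q) :
    coactTwist coact (convConst v : WithConv (C →ₗ[R] Module.End R Q)).ofConv = lTensor M v := by
  ext m q
  have hv (z : M ⊗[R] C) :
      lTensor M ((convConst v : WithConv (C →ₗ[R] Module.End R Q)).ofConv.flip q) z =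
        TensorProduct.rid R M (lTensor M counit z) ⊗ₜ v q := by
    induction z with
    | zero => simp
    | add x y hx hy => simp only [map_add, hx, hy, add_tmul]
    | tmul m c => simp [convConst_apply, smul_tmul]
  simp only [AlgebraTensorModule.curry_apply, restrictScalars_self, curry_apply, coactTwist_tmul,
    hv, h.counit, lTensor_tmul]

lemma coactTwist_convMul (h : IsComodule coact) (f g : WithConv (C →ₗ[R] Module.End R Q)) :
    coactTwist coact (f * g).ofConv = coactTwist coact f.ofConv * coactTwist coact g.ofConv := by
  ext m q
  let Λ : C ⊗[R] C →ₗ[R] Q := TensorProduct.lift f.ofConv ∘ₗ lTensor C (g.ofConv.flip q)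
  have hfg : (f * g).ofConv.flip q = Λ ∘ₗ comul := by
    ext c
    simp only [LinearMap.flip_apply, (ℛ R c).convMul_apply]
    simp [Λ, ← (ℛ R c).eq]
  have hf (z : M ⊗[R] C) : coactTwist coact f.ofConv (lTensor M (g.ofConv.flip q) z) =
      lTensor M Λ (TensorProduct.assoc R M C C (rTensor C coact z)) := by
    induction z with
    | zero => simp
    | add x y hx hy => simp only [map_add, hx, hy]
    | tmul m c =>
      simp only [lTensor_tmul, coactTwist_tmul, rTensor_tmul]
      induction coact m with
      | zero => simp
      | add x y hx hy => simp only [map_add, hx, hy, add_tmul]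
      | tmul m c => simp [Λ]
  simp [coactTwist_tmul, hf, h.coassoc, hfg, lTensor_comp]

/-- `coactTwist` as a monoid homomorphism out of the convolution algebra. -/
def coactTwistHom (h : IsComodule coact) (Q : Type*) [AddCommMonoid Q] [Module R Q] :
    WithConv (C →ₗ[R] Module.End R Q) →* Module.End R (M ⊗[R] Q) where
  toFun f := coactTwist coact f.ofConv
  map_one' := by
    rw [← map_one convConst, coactTwist_convConst h, Module.End.one_eq_id, lTensor_id]
    rfl
  map_mul' := coactTwist_convMul h

end Comodule

section HopfComodule

variable {R C M N P Q : Type*} [CommSemiring R] [Semiring C] [HopfAlgebra R C]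
  [AddCommMonoid M] [Module R M] [AddCommMonoid N] [Module R N] [AddCommMonoid P] [Module R P]
  [AddCommMonoid Q] [Module R Q] {coact : M →ₗ[R] M ⊗[R] C}

/-- The invertible operator `m ⊗ q ↦ m₍₀₎ ⊗ f(m₍₁₎)(q)` attached to a representation `f` on `Q`. -/
def IsComodule.twistUnit (h : IsComodule coact) (f : C →ₐ[R] Module.End R Q) :
    (Module.End R (M ⊗[R] Q))ˣ :=
  Units.map (coactTwistHom h Q) (convUnit f)

/-- The invertible operator `m ⊗ q ↦ m₍₀₎ ⊗ f(m₍₁₎)(q)` attached to a right representation `f`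
on `Q`. -/
def IsComodule.opTwistUnit (h : IsComodule coact)
    (hS : Function.Bijective (antipode R (A := C))) (f : Cᵐᵒᵖ →ₐ[R] Module.End R Q) :
    (Module.End R (M ⊗[R] Q))ˣ :=
  Units.map (coactTwistHom h Q) (opConvUnit hS f)

@[simp]
lemma IsComodule.twistUnit_tmul (h : IsComodule coact) (f : C →ₐ[R] Module.End R Q) (m : M)
    (q : Q) : (h.twistUnit f).val (m ⊗ₜ q) = lTensor M (f.toLinearMap.flip q) (coact m) :=
  coactTwist_tmul coact _ m q

@[simp]
lemma IsComodule.opTwistUnit_tmul (h : IsComodule coact)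
    (hS : Function.Bijective (antipode R (A := C))) (f : Cᵐᵒᵖ →ₐ[R] Module.End R Q) (m : M)
    (q : Q) : (h.opTwistUnit hS f).val (m ⊗ₜ q) =
      lTensor M ((f.toLinearMap ∘ₗ (opLinearEquiv R).toLinearMap).flip q) (coact m) :=
  coactTwist_tmul coact _ m q

lemma IsComodule.commute_opTwistUnit_lTensor (h : IsComodule coact)
    (hS : Function.Bijective (antipode R (A := C))) {f : Cᵐᵒᵖ →ₐ[R] Module.End R Q}
    {v : Module.End R Q} (hv : ∀ c, Commute (f c) v) :
    Commute (h.opTwistUnit hS f).val (lTensor M v) := by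
  have hflip (q : Q) : (f.toLinearMap ∘ₗ (opLinearEquiv R).toLinearMap).flip (v q) =
      v ∘ₗ (f.toLinearMap ∘ₗ (opLinearEquiv R).toLinearMap).flip q :=
    LinearMap.ext fun c ↦ congr($(hv (op c)) q)
  ext m q
  simp [hflip, lTensor_comp]

/-- The operator `twistUnit f` on the first two legs of `M ⊗ (N ⊗ P)`. -/
abbrev IsComodule.twistUnit₁₂ (h : IsComodule coact) (P : Type*) [AddCommMonoid P] [Module R P]
    (f : C →ₐ[R] Module.End R N) : (Module.End R (M ⊗[R] (N ⊗[R] P)))ˣ :=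
  h.twistUnit ((Module.End.rTensorAlgHom R N P).comp f)

/-- The operator `opTwistUnit hS f` on the outer two legs of `M ⊗ (N ⊗ P)`. -/
abbrev IsComodule.opTwistUnit₁₃ (h : IsComodule coact)
    (hS : Function.Bijective (antipode R (A := C))) (N : Type*) [AddCommMonoid N] [Module R N]
    (f : Cᵐᵒᵖ →ₐ[R] Module.End R P) : (Module.End R (M ⊗[R] (N ⊗[R] P)))ˣ :=
  h.opTwistUnit hS ((Module.End.lTensorAlgHom R P N).comp f)

/-- The operator `opTwistUnit hS f` on the last two legs of `N ⊗ (M ⊗ P)`. -/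
abbrev IsComodule.opTwistUnit₂₃ (h : IsComodule coact)
    (hS : Function.Bijective (antipode R (A := C))) (N : Type*) [AddCommMonoid N] [Module R N]
    (f : Cᵐᵒᵖ →ₐ[R] Module.End R P) : (Module.End R (N ⊗[R] (M ⊗[R] P)))ˣ :=
  Units.map (Module.End.lTensorAlgHom R (M ⊗[R] P) N).toMonoidHom (h.opTwistUnit hS f)

lemma IsComodule.coactTwist_adjointAction (h : IsComodule coact) (f : C →ₐ[R] Module.End R Q)
    (v : Module.End R Q) :
    coactTwist coact ((adjointAction f).toLinearMap.flip v) =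
      (h.twistUnit f).val * lTensor M v * (h.twistUnit f)⁻¹.val := by
  have hv := congr(coactTwistHom h Q $(toConv_adjointAction f v))
  rw [map_mul, map_mul] at hv
  exact hv.trans congr(_ * $(coactTwist_convConst h v) * _)

/-- Right multiplication, as an algebra map out of the opposite algebra. -/
def mulRightHom (R C : Type*) [CommSemiring R] [Semiring C] [Algebra R C] :
    Cᵐᵒᵖ →ₐ[R] Module.End R C :=
  Algebra.lsmul R R C

@[simp]
lemma mulRightHom_apply (x : Cᵐᵒᵖ) (y : C) : mulRightHom R C x y = y * x.unop := rfl

end HopfComodule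

section SmashEnd

variable {R C M Q : Type*} [CommSemiring R] [Semiring C] [HopfAlgebra R C]
  [AddCommMonoid M] [Module R M] [AddCommMonoid Q] [Module R Q] {coact : M →ₗ[R] M ⊗[R] C}

/-- The map `u ⊗ v ↦ (u ⊗ 1) W (1 ⊗ v) W⁻¹`, where `W` is the operator
`m ⊗ q ↦ m₍₀₎ ⊗ f(m₍₁₎)(q)`. This is the map `φ` of the theorem when `f` is the action of `N`
twisted by `γ⁻¹`. -/
def smashEnd (h : IsComodule coact) (f : C →ₐ[R] Module.End R Q) :
    Module.End R M ⊗[R] Module.End R Q →ₗ[R] Module.End R (M ⊗[R] Q) :=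
  TensorProduct.lift ((LinearMap.mul R (Module.End R (M ⊗[R] Q))).compl₁₂ (rTensorHom Q)
    (mulLeftRight R ((h.twistUnit f).val, (h.twistUnit f)⁻¹.val) ∘ₗ lTensorHom M))

@[simp]
lemma smashEnd_tmul (h : IsComodule coact) (f : C →ₐ[R] Module.End R Q) (u : Module.End R M)
    (v : Module.End R Q) : smashEnd h f (u ⊗ₜ v) =
      rTensor Q u * ((h.twistUnit f).val * lTensor M v * (h.twistUnit f)⁻¹.val) := rfl

lemma smashEnd_one_tmul_one (h : IsComodule coact) (f : C →ₐ[R] Module.End R Q) :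
    smashEnd h f (1 ⊗ₜ 1) = 1 := by
  rw [smashEnd_tmul, Module.End.one_eq_id, Module.End.one_eq_id, rTensor_id, lTensor_id,
    ← Module.End.one_eq_id]
  simp

/-- The linear map `m ⊗ x ↦ (1 ⊗ f(x)) F(m)` extending `F` along `m ↦ m ⊗ 1`. -/
def mulRepr (f : C →ₐ[R] Module.End R Q) (F : M →ₗ[R] M ⊗[R] Module.End R Q) :
    M ⊗[R] C →ₗ[R] M ⊗[R] Module.End R Q :=
  lTensor M (TensorProduct.lift ((LinearMap.mul R (Module.End R Q)).flip.compl₂ f.toLinearMap)) ∘ₗ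
    (TensorProduct.assoc R M (Module.End R Q) C).toLinearMap ∘ₗ rTensor C F

lemma mulRepr_tmul_mul (f : C →ₐ[R] Module.End R Q) (F : M →ₗ[R] M ⊗[R] Module.End R Q) (m : M)
    (x y : C) :
    mulRepr f F (m ⊗ₜ (x * y)) = lTensor M (mulLeft R (f x)) (mulRepr f F (m ⊗ₜ y)) := by
  simp only [mulRepr, coe_comp, LinearEquiv.coe_coe, Function.comp_apply, rTensor_tmul]
  induction F m with
  | zero => simp
  | add x y hx hy => simp only [map_add, add_tmul, hx, hy]
  | tmul m v => simp [mul_assoc]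

lemma mulRepr_tmul_one (f : C →ₐ[R] Module.End R Q) (F : M →ₗ[R] M ⊗[R] Module.End R Q) (m : M) :
    mulRepr f F (m ⊗ₜ 1) = F m := by
  simp only [mulRepr, coe_comp, LinearEquiv.coe_coe, Function.comp_apply, rTensor_tmul]
  induction F m with
  | zero => simp
  | add x y hx hy => simp only [map_add, add_tmul, hx, hy]
  | tmul m v => simp

lemma eq_of_mulRepr_coact_eq (h : IsComodule coact) (hS : Function.Bijective (antipode R (A := C)))
    (f : C →ₐ[R] Module.End R Q) {F G : M →ₗ[R] M ⊗[R] Module.End R Q}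
    (hFG : ∀ m, mulRepr f F (coact m) = mulRepr f G (coact m)) : F = G := by
  let V := h.opTwistUnit hS (mulRightHom R C)
  have hV (F : M →ₗ[R] M ⊗[R] Module.End R Q) (m : M) (x : C) :
      mulRepr f F (V.val (m ⊗ₜ x)) = lTensor M (mulLeft R (f x)) (mulRepr f F (coact m)) := by
    rw [IsComodule.opTwistUnit_tmul]
    induction coact m with
    | zero => simp
    | add x y hx hy => simp only [map_add, hx, hy]
    | tmul m y => exact mulRepr_tmul_mul f F m x y
  have hcomp : mulRepr f F ∘ₗ V.val = mulRepr f G ∘ₗ V.val := by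
    ext m x : 3
    simp only [AlgebraTensorModule.curry_apply, restrictScalars_self, curry_apply, comp_apply, hV,
      hFG]
  have heq : mulRepr f F = mulRepr f G := by
    have := congr($hcomp ∘ₗ V⁻¹.val)
    rwa [comp_assoc, comp_assoc, ← Module.End.mul_eq_comp, V.mul_inv] at this
  ext m
  rw [← mulRepr_tmul_one f F, heq, mulRepr_tmul_one]

lemma smashEnd_twistUnit_apply (h : IsComodule coact) (f : C →ₐ[R] Module.End R Q)
    (z : Module.End R M ⊗[R] Module.End R Q) (m : M) (q : Q) :
    smashEnd h f z ((h.twistUnit f).val (m ⊗ₜ q)) = lTensor M (applyₗ q)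
      (mulRepr f (rTensorHomToHomRTensor (.id R) M M (Module.End R Q) z) (coact m)) := by
  induction z with
  | zero => simp [mulRepr]
  | add z w hz hw =>
    simp only [map_add, LinearMap.add_apply, hz, hw, mulRepr, rTensor_add, comp_add]
  | tmul u v =>
    rw [← Module.End.mul_apply, smashEnd_tmul, mul_assoc, Units.inv_mul_cancel_right]
    simp only [Module.End.mul_apply, lTensor_tmul, IsComodule.twistUnit_tmul]
    induction coact m with
    | zero => simp
    | add x y hx hy => simp only [map_add, hx, hy]
    | tmul m c => simp [mulRepr]

lemma lTensorHomToHomLTensor_apply_eq_lTensor {P : Type*} [AddCommMonoid P] [Module R P]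
    (y : P ⊗[R] (M →ₗ[R] Q)) (m : M) :
    lTensorHomToHomLTensor (.id R) M P Q y m = lTensor P (applyₗ m) y := by
  induction y with
  | zero => simp
  | add x y hx hy => simp only [map_add, LinearMap.add_apply, hx, hy]
  | tmul p v => simp

lemma rTensorHomToHomRTensor_apply_eq_rTensor {P : Type*} [AddCommMonoid P] [Module R P]
    (z : (M →ₗ[R] P) ⊗[R] Q) (m : M) :
    rTensorHomToHomRTensor (.id R) M P Q z m = rTensor Q (applyₗ m) z := by
  induction z with
  | zero => simp
  | add x y hx hy => simp only [map_add, LinearMap.add_apply, hx, hy]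
  | tmul u q => simp

lemma smashEnd_injective [Module.Finite R M] [Module.Projective R M] [Module.Finite R Q]
    [Module.Projective R Q] (h : IsComodule coact)
    (hS : Function.Bijective (antipode R (A := C))) (f : C →ₐ[R] Module.End R Q) :
    Function.Injective (smashEnd h f) := by
  intro z w hzw
  apply (rTensorHomEquivHomRTensor R M M (Module.End R Q)).injective
  refine eq_of_mulRepr_coact_eq h hS f fun m ↦ ?_
  apply (lTensorHomEquivHomLTensor R Q M Q).injective
  ext q
  simp only [lTensorHomEquivHomLTensor_apply, rTensorHomEquivHomRTensor_apply,
    lTensorHomToHomLTensor_apply_eq_lTensor, ← smashEnd_twistUnit_apply h, hzw]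

lemma smashEnd_bijective {k C M Q : Type*} [Field k] [Semiring C] [HopfAlgebra k C]
    [AddCommGroup M] [Module k M] [FiniteDimensional k M]
    [AddCommGroup Q] [Module k Q] [FiniteDimensional k Q] {coact : M →ₗ[k] M ⊗[k] C}
    (h : IsComodule coact) (hS : Function.Bijective (antipode k (A := C)))
    (f : C →ₐ[k] Module.End k Q) : Function.Bijective (smashEnd h f) := by
  have hinj := smashEnd_injective h hS f
  refine ⟨hinj, (injective_iff_surjective_of_finrank_eq_finrank ?_).mp hinj⟩
  simp only [Module.finrank_tensorProduct, Module.finrank_linearMap]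
  ring

end SmashEnd

section TensorOperators

variable {R C D M N P Q : Type*} [CommSemiring R] [AddCommMonoid M] [Module R M]
  [AddCommMonoid N] [Module R N] [AddCommMonoid P] [Module R P] [AddCommMonoid Q] [Module R Q]

lemma exists_nat_sum_tmul_eq (x : M ⊗[R] N) :
    ∃ (s : Finset ℕ) (m : ℕ → M) (n : ℕ → N), x = ∑ i ∈ s, m i ⊗ₜ[R] n i := by
  obtain ⟨d, m, n, rfl⟩ := exists_sum_tmul_eq x
  refine ⟨Finset.range d, fun i ↦ if h : i < d then m ⟨i, h⟩ else 0,
    fun i ↦ if h : i < d then n ⟨i, h⟩ else 0, ?_⟩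
  rw [Finset.sum_range]
  simp

lemma exists_nat_sum_tmul_tmul_eq (x : (M ⊗[R] N) ⊗[R] P) :
    ∃ (s : Finset ℕ) (m : ℕ → M) (n : ℕ → N) (p : ℕ → P),
      x = ∑ i ∈ s, (m i ⊗ₜ[R] n i) ⊗ₜ[R] p i := by
  obtain ⟨s, z, p, rfl⟩ := exists_nat_sum_tmul_eq x
  choose r m n h using fun i ↦ exists_nat_sum_tmul_eq (z i)
  have hpair : Function.Injective fun q : (_ : ℕ) × ℕ ↦ Nat.pair q.1 q.2 := by
    rintro ⟨i, j⟩ ⟨i', j'⟩ hij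
    obtain ⟨rfl, rfl⟩ := Nat.pair_eq_pair.mp hij
    rfl
  refine ⟨(s.sigma r).map ⟨_, hpair⟩, fun l ↦ m l.unpair.1 l.unpair.2,
    fun l ↦ n l.unpair.1 l.unpair.2, fun l ↦ p l.unpair.1, ?_⟩
  simp [Finset.sum_sigma, ← sum_tmul, ← h]

@[simp]
lemma lTensorAlgHom_eq_lTensor (f : Module.End R M) :
    Module.End.lTensorAlgHom R M N f = lTensor N f := rfl

@[simp]
lemma rTensorAlgHom_eq_rTensor (f : Module.End R M) :
    Module.End.rTensorAlgHom R M N f = rTensor N f := rfl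

lemma commute_lTensor_rTensor (f : Module.End R M) (g : Module.End R N) :
    Commute (lTensor M g) (rTensor N f) :=
  (lTensor_comp_rTensor ..).trans (rTensor_comp_lTensor ..).symm

lemma rTensor_comul_comul_apply [AddCommMonoid C] [Module R C] [Coalgebra R C] [AddCommMonoid D]
    [Module R D] [Coalgebra R D] (f : C →ₗc[R] D) (x : C) :
    rTensor D comul (comul (R := R) (f x)) =
      TensorProduct.map (TensorProduct.map f.toLinearMap f.toLinearMap) f.toLinearMap
        (rTensor C comul (comul x)) := by
  rw [← CoalgHomClass.map_comp_comul_apply f, rTensor, rTensor, map_map, map_map, id_comp, comp_id]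
  exact congr(TensorProduct.map $(f.map_comp_comul.symm) f.toLinearMap (comul x))

/-- Conjugation by the associator, identifying the operators on `(M ⊗ N) ⊗ P` with those on
`M ⊗ (N ⊗ P)`. -/
def assocConj : Module.End R ((M ⊗[R] N) ⊗[R] P) ≃ₐ[R] Module.End R (M ⊗[R] (N ⊗[R] P)) :=
  (TensorProduct.assoc R M N P).conjAlgEquiv R

lemma assocConj_map_map (u : Module.End R M) (v : Module.End R N) (w : Module.End R P) :
    assocConj (TensorProduct.map (TensorProduct.map u v) w) =
      TensorProduct.map u (TensorProduct.map v w) := by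
  ext m n p
  simp [assocConj]

lemma assocConj_rTensor_coactTwist [AddCommMonoid C] [Module R C] (coact : M →ₗ[R] M ⊗[R] C)
    (f : C →ₗ[R] Module.End R N) :
    assocConj (rTensor P (coactTwist coact f)) = coactTwist coact (rTensorHom P ∘ₗ f) := by
  ext m n p
  simp only [assocConj, AlgebraTensorModule.curry_apply, restrictScalars_self, curry_apply,
    LinearEquiv.conjAlgEquiv_apply, coe_comp, LinearEquiv.coe_coe, Function.comp_apply,
    assoc_symm_tmul, rTensor_tmul, coactTwist_tmul]
  induction coact m with
  | zero => simp
  | add x y hx hy => simp only [map_add, add_tmul, hx, hy]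
  | tmul m c => simp

/-- The diagonal action `x·(m ⊗ n) = x₁·m ⊗ x₂·n` on a tensor product. -/
def tensorActHom [Semiring C] [Bialgebra R C] (f : C →ₐ[R] Module.End R M)
    (g : C →ₐ[R] Module.End R N) : C →ₐ[R] Module.End R (M ⊗[R] N) :=
  (Module.endTensorEndAlgHom.comp (Algebra.TensorProduct.map f g)).comp
    (Bialgebra.comulAlgHom R C)

lemma convUnit_tensorActHom [Semiring C] [HopfAlgebra R C] (f : C →ₐ[R] Module.End R M)
    (g : C →ₐ[R] Module.End R N) :
    convUnit (tensorActHom f g) = convUnit ((Module.End.rTensorAlgHom R M N).comp f) *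
      convUnit ((Module.End.lTensorAlgHom R N M).comp g) := by
  ext x m n
  simp only [Units.val_mul, (ℛ R x).convMul_apply]
  simp [tensorActHom, ← (ℛ R x).eq, LinearMap.sum_apply, Module.endTensorEndAlgHom_apply]

/-- The linear map `u ⊗ x ↦ u ⊗ f(x)` attached to a right representation `f` on `Q`. Applied to
`u₍₀₎ ⊗ u₍₁₎`, it turns the coaction of `End M` into an operator on `M ⊗ Q`. -/
def endTwist [Semiring C] [Algebra R C] (f : Cᵐᵒᵖ →ₐ[R] Module.End R Q) :
    Module.End R M ⊗[R] C →ₗ[R] Module.End R (M ⊗[R] Q) :=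
  homTensorHomMap (.id R) M Q M Q ∘ₗ
    lTensor (Module.End R M) (f.toLinearMap ∘ₗ (opLinearEquiv R).toLinearMap)

@[simp]
lemma endTwist_tmul [Semiring C] [Algebra R C] (f : Cᵐᵒᵖ →ₐ[R] Module.End R Q)
    (u : Module.End R M) (x : C) : endTwist f (u ⊗ₜ x) = TensorProduct.map u (f (op x)) := rfl

lemma endTwist_apply_tmul [Semiring C] [Algebra R C] (f : Cᵐᵒᵖ →ₐ[R] Module.End R Q)
    (z : Module.End R M ⊗[R] C) (m : M) (q : Q) :
    endTwist f z (m ⊗ₜ q) =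
      lTensor M ((f.toLinearMap ∘ₗ (opLinearEquiv R).toLinearMap).flip q)
        (rTensor C (applyₗ m) z) := by
  induction z with
  | zero => simp
  | add x y hx hy => simp only [map_add, LinearMap.add_apply, hx, hy]
  | tmul v x => simp

lemma endTwist_mulRightHom_injective [Semiring C] [Algebra R C] [Module.Finite R M]
    [Module.Projective R M] : Function.Injective (endTwist (M := M) (mulRightHom R C)) := by
  intro z w hzw
  apply (rTensorHomEquivHomRTensor R M M C).injective
  have hid : ((mulRightHom R C).toLinearMap ∘ₗ (opLinearEquiv R).toLinearMap).flip 1 = .id := by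
    ext x
    exact one_mul x
  ext m
  simpa [endTwist_apply_tmul, hid, rTensorHomToHomRTensor_apply_eq_rTensor] using
    congr($hzw (m ⊗ₜ (1 : C)))

/-- The automorphism `β ∘ α⁻¹`, which is what remains of `α` and `β` in the condition on an
`(α, β)`-Yetter-Drinfeld module once its action is twisted by `α⁻¹`. -/
def relAut [Semiring C] [Bialgebra R C] (α β : C ≃ₐc[R] C) : C →ₐ[R] C :=
  (α.symm.trans β : C ≃ₐc[R] C)

@[simp]
lemma relAut_apply [Semiring C] [Bialgebra R C] (α β : C ≃ₐc[R] C) (x : C) :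
    relAut α β x = β (α.symm x) := rfl

end TensorOperators

lemma conj_mul_conj_eq_of_mul_eq {G : Type*} [Monoid G] (A B W C : Gˣ) {d u v : G}
    (h : (A * B * W : G) = W * C * d) (hu : Commute (B : G) u) (hv : Commute d v) :
    (A * B : Gˣ) * (u * (W * v * ↑W⁻¹)) * ↑(A * B)⁻¹ =
      (A * u * ↑A⁻¹) * W * (C * v * ↑C⁻¹) * ↑W⁻¹ := by
  have h' : (↑C⁻¹ * ↑W⁻¹ * A * B : G) = d * ↑W⁻¹ := by
    rw [Units.eq_mul_inv_iff_mul_eq, mul_assoc, mul_assoc, mul_assoc, ← mul_assoc (A : G), h]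
    simp [mul_assoc]
  rw [Units.mul_inv_eq_iff_eq_mul]
  symm
  calc (A * u * ↑A⁻¹ * W * (C * v * ↑C⁻¹) * ↑W⁻¹ * ↑(A * B) : G)
      = A * u * ↑A⁻¹ * W * C * v * (↑C⁻¹ * ↑W⁻¹ * A * B) := by
        simp only [mul_assoc, Units.val_mul]
    _ = A * u * ↑A⁻¹ * (W * C * d) * (v * ↑W⁻¹) := by
        rw [h', mul_assoc _ v, ← mul_assoc v, ← hv.eq]
        simp only [mul_assoc]
    _ = A * (u * B) * (W * v * ↑W⁻¹) := by
        rw [← h]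
        simp [mul_assoc]
    _ = ↑(A * B) * (u * (W * v * ↑W⁻¹)) := by
        rw [← hu.eq]
        simp only [mul_assoc, Units.val_mul]

section HopfAut

variable {k H : Type} [Field k] [Ring H] [HopfAlgebra k H] {Sinv : H → H}

lemma IsHopfAut.exists_bialgEquiv {φ : H ≃ₗ[k] H} (h : IsHopfAut k H φ) :
    ∃ e : H ≃ₐc[k] H, e.toCoalgEquiv.toLinearEquiv = φ := by
  obtain ⟨map_mul, map_one, map_comul, map_counit⟩ := h
  refine ⟨.ofAlgEquiv (AlgEquiv.ofLinearEquiv φ map_one map_mul) ?_ ?_, rfl⟩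
  · ext x
    exact map_counit x
  · ext x
    exact (map_comul x).symm

lemma IsAntipodeInv.bijective (hS : IsAntipodeInv k H Sinv) :
    Function.Bijective (antipode k (A := H)) :=
  Function.bijective_iff_has_inverse.mpr ⟨Sinv, hS.2, hS.1⟩

lemma IsAntipodeInv.ofBijective_symm_apply (hS : IsAntipodeInv k H Sinv) (x : H) :
    (LinearEquiv.ofBijective (antipode k) hS.bijective).symm x = Sinv x := by
  rw [LinearEquiv.symm_apply_eq]
  exact (hS.1 x).symm

lemma IsAntipodeInv.apply_symm (hS : IsAntipodeInv k H Sinv) (α : H ≃ₐc[k] H) (x : H) :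
    α (Sinv (α.symm x)) = Sinv x := by
  have h := map_antipode (α : H →ₐc[k] H) (Sinv (α.symm x))
  rw [hS.1, BialgEquiv.coe_toBialgHom, α.apply_symm_apply] at h
  nth_rw 2 [h]
  rw [hS.2]

end HopfAut

section YetterDrinfeld

variable {k H M N : Type} [Field k] [Ring H] [HopfAlgebra k H] [AddCommGroup M] [Module k M]
  [AddCommGroup N] [Module k N] {act : H →ₗ[k] M →ₗ[k] M} {coact : M →ₗ[k] M ⊗[k] H}
  {Sinv : H → H} {α β : H ≃ₐc[k] H}

lemma IsYD.isComodule (h : IsYD k H Sinv α β act coact) : IsComodule coact :=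
  ⟨h.2.2.1, h.2.2.2.1⟩

/-- The action of an `(α, β)`-Yetter-Drinfeld module, twisted by `α⁻¹`, as an algebra map. -/
def IsYD.actHom (h : IsYD k H Sinv α β act coact) : H →ₐ[k] Module.End k M :=
  (AlgHom.ofLinearMap act (LinearMap.ext h.1) fun x y ↦ LinearMap.ext (h.2.1 x y)).comp
    (α.symm : H ≃ₐ[k] H)

lemma IsYD.actHom_apply (h : IsYD k H Sinv α β act coact) (x : H) :
    h.actHom x = act (α.symm x) := rfl

lemma IsYD.coact_actHom_apply (hS : IsAntipodeInv k H Sinv) (h : IsYD k H Sinv α β act coact)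
    (x : H) (m : M) {s t : Finset ℕ} {a b c m₁ : ℕ → H} {m₀ : ℕ → M}
    (hx : rTensor H comul (comul (R := k) x) = ∑ i ∈ s, (a i ⊗ₜ[k] b i) ⊗ₜ[k] c i)
    (hm : coact m = ∑ j ∈ t, m₀ j ⊗ₜ[k] m₁ j) :
    coact (h.actHom x m) = ∑ i ∈ s, ∑ j ∈ t,
      h.actHom (b i) (m₀ j) ⊗ₜ[k] (relAut α β (c i) * m₁ j * Sinv (a i)) := by
  have hx' : rTensor H comul (comul (R := k) (α.symm x)) =
      ∑ i ∈ s, (α.symm (a i) ⊗ₜ[k] α.symm (b i)) ⊗ₜ[k] α.symm (c i) := by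
    rw [← BialgEquiv.coe_toBialgHom]
    refine (rTensor_comul_comul_apply (α.symm : H →ₐc[k] H).toCoalgHom x).trans ?_
    simp only [hx, map_sum, map_tmul]
    rfl
  rw [h.actHom_apply, h.2.2.2.2 _ m s t _ _ _ m₀ m₁ hx' hm]
  simp only [hS.apply_symm]
  rfl

/-- The Yetter-Drinfeld condition as a relation between operators: with `V` the operator
`m ⊗ y ↦ m₍₀₎ ⊗ y m₍₁₎` on `M ⊗ H`, it reads
`(1 ⊗ R(x₁)) V (x₂ ⊗ 1) = (x₁ ⊗ 1) V (1 ⊗ R(β α⁻¹ x₂))`, where `R(x)` is right multiplication. -/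
lemma IsYD.convMul_eq (hS : IsAntipodeInv k H Sinv) (h : IsYD k H Sinv α β act coact) :
    ((opConvUnit hS.bijective
        ((Module.End.lTensorAlgHom k H M).comp (mulRightHom k H))).val *
      convConst (h.isComodule.opTwistUnit hS.bijective (mulRightHom k H)).val *
      (convUnit ((Module.End.rTensorAlgHom k M H).comp h.actHom)).val :
        WithConv (H →ₗ[k] Module.End k (M ⊗[k] H))) =
    (convUnit ((Module.End.rTensorAlgHom k M H).comp h.actHom)).val *
      convConst (h.isComodule.opTwistUnit hS.bijective (mulRightHom k H)).val *
      (opConvUnit hS.bijective ((Module.End.lTensorAlgHom k H M).comp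
        ((mulRightHom k H).comp (AlgHom.op (relAut α β))))).val := by
  rw [mul_assoc, ← Units.eq_inv_mul_iff_mul_eq, ← mul_assoc, ← mul_assoc]
  ext x m y
  obtain ⟨s, a, b, c, hx⟩ := exists_nat_sum_tmul_tmul_eq (rTensor H comul (comul (R := k) x))
  obtain ⟨t, m₀, m₁, hm⟩ := exists_nat_sum_tmul_eq (coact m)
  have hprod := convMul_convMul_apply_of_comul_eq (A := Module.End k (M ⊗[k] H))
    (opConvUnit hS.bijective ((Module.End.lTensorAlgHom k H M).comp (mulRightHom k H)))⁻¹.val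
    (convUnit ((Module.End.rTensorAlgHom k M H).comp h.actHom)).val
    (convConst (h.isComodule.opTwistUnit hS.bijective (mulRightHom k H)).val *
      (opConvUnit hS.bijective ((Module.End.lTensorAlgHom k H M).comp
        ((mulRightHom k H).comp (AlgHom.op (relAut α β))))).val) hx
  rw [← mul_assoc] at hprod
  simp only [convConst_mul_apply, AlgebraTensorModule.curry_apply, restrictScalars_self,
    curry_apply, hprod]
  simp [opConvUnit_inv_apply, h.coact_actHom_apply hS x m hx hm, hm,
    mul_assoc, hS.ofBijective_symm_apply, -convMul_apply, -Module.End.lTensorAlgHom_apply_apply,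
    -Module.End.rTensorAlgHom_apply_apply]

section ActionOnEnd

lemma EndActChar.apply_eq_adjointAction {θ : H → H}
    {actE : H →ₗ[k] Module.End k M →ₗ[k] Module.End k M} (h : EndActChar k H θ act actE)
    {ρ : H →ₐ[k] Module.End k M} (hρ : ∀ x, ρ x = act (θ x)) :
    actE = (adjointAction ρ).toLinearMap := by
  ext x u m
  obtain ⟨s, p, q, hpq⟩ := exists_nat_sum_tmul_eq (comul (R := k) x)
  rw [h x u m s p q hpq]
  simp [adjointAction, hpq, hρ]

lemma TensorActChar.tensorActHom_apply {γ δ : H ≃ₐc[k] H} {actN : H →ₗ[k] N →ₗ[k] N}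
    {coactN : N →ₗ[k] N ⊗[k] H} {actT : H →ₗ[k] (M ⊗[k] N) →ₗ[k] (M ⊗[k] N)}
    (h : TensorActChar k H γ (fun x ↦ γ.symm (β (γ x))) act actN actT)
    (hM : IsYD k H Sinv α β act coact) (hN : IsYD k H Sinv γ δ actN coactN) (x : H) :
    tensorActHom hM.actHom (hN.actHom.comp (relAut α β)) x = actT (γ.symm (α.symm x)) := by
  obtain ⟨s, p, q, hpq⟩ := exists_nat_sum_tmul_eq (comul (R := k) x)
  have hpq' : comul (R := k) (γ.symm (α.symm x)) =
      ∑ i ∈ s, γ.symm (α.symm (p i)) ⊗ₜ[k] γ.symm (α.symm (q i)) := by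
    rw [← CoalgHomClass.map_comp_comul_apply γ.symm, ← CoalgHomClass.map_comp_comul_apply α.symm,
      hpq]
    simp
  ext m n
  simp only [AlgebraTensorModule.curry_apply, restrictScalars_self, curry_apply,
    h _ m n s _ _ hpq']
  simp [tensorActHom, hpq, hM.actHom_apply, hN.actHom_apply, LinearMap.sum_apply,
    Module.endTensorEndAlgHom_apply]

lemma eq_smashEnd (h : IsComodule coact) (ρ : H →ₐ[k] Module.End k N)
    {φ : Module.End k M ⊗[k] Module.End k N →ₗ[k] Module.End k (M ⊗[k] N)}
    (hφ : ∀ (u : Module.End k M) (v : Module.End k N) (m : M) (n : N) (t : Finset ℕ) (m₀ : ℕ → M)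
      (m₁ : ℕ → H), coact m = ∑ j ∈ t, m₀ j ⊗ₜ[k] m₁ j →
      φ (u ⊗ₜ v) (m ⊗ₜ n) = ∑ j ∈ t, u (m₀ j) ⊗ₜ[k] adjointAction ρ (m₁ j) v n) :
    φ = smashEnd h ρ := by
  ext u v m n
  obtain ⟨t, m₀, m₁, hm⟩ := exists_nat_sum_tmul_eq (coact m)
  simp only [AlgebraTensorModule.curry_apply, restrictScalars_self, curry_apply, smashEnd_tmul,
    ← h.coactTwist_adjointAction, Module.End.mul_apply, coactTwist_tmul,
    hφ u v m n t m₀ m₁ hm, hm]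
  simp

lemma IsYD.convMul_twistUnit (hS : IsAntipodeInv k H Sinv) (h : IsYD k H Sinv α β act coact)
    (ρ : H →ₐ[k] Module.End k N) :
    ((convUnit ((Module.End.rTensorAlgHom k M N).comp h.actHom)).val *
      (convUnit ((Module.End.lTensorAlgHom k N M).comp (ρ.comp (relAut α β)))).val *
      (Units.map convConst (h.isComodule.twistUnit ρ)).val :
        WithConv (H →ₗ[k] Module.End k (M ⊗[k] N))) =
    (Units.map convConst (h.isComodule.twistUnit ρ)).val *
      (convUnit ((Module.End.lTensorAlgHom k N M).comp ρ)).val *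
      (convUnit ((Module.End.rTensorAlgHom k M N).comp h.actHom)).val := by
  ext x m n
  have hleft (a : H) (z : M ⊗[k] H) : lTensor M (ρ.toLinearMap.flip n)
      (lTensor M (mulRightHom k H (op a)) (lTensor M
        (((mulRightHom k H).toLinearMap ∘ₗ (opLinearEquiv k).toLinearMap).flip 1) z)) =
      lTensor M (ρ.toLinearMap.flip (ρ a n)) z := by
    induction z with
    | zero => simp
    | add x y hx hy => simp only [map_add, hx, hy]
    | tmul m x => simp
  have hright (f : Module.End k M) (a : H) (z : M ⊗[k] H) : lTensor M (ρ.toLinearMap.flip n)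
      (rTensor H f (lTensor M
        (((mulRightHom k H).toLinearMap ∘ₗ (opLinearEquiv k).toLinearMap).flip a) z)) =
      rTensor N f (lTensor M (ρ a) (lTensor M (ρ.toLinearMap.flip n) z)) := by
    induction z with
    | zero => simp
    | add x y hx hy => simp only [map_add, hx, hy]
    | tmul m x => simp
  obtain ⟨s, p, q, hpq⟩ := exists_nat_sum_tmul_eq (comul (R := k) x)
  have hx := congr(lTensor M (ρ.toLinearMap.flip n) ($(h.convMul_eq hS) x (m ⊗ₜ[k] (1 : H))))
  simp only [mul_assoc, convMul_apply_of_comul_eq _ _ hpq] at hx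
  rw [mul_assoc (Units.val _) (Units.val (convUnit _))]
  simpa [convConst_mul_apply, mul_convConst_apply, LinearMap.sum_apply,
    convMul_apply_of_comul_eq _ _ hpq, hleft, hright, -convMul_apply,
    -Module.End.lTensorAlgHom_apply_apply, -Module.End.rTensorAlgHom_apply_apply] using hx.symm

lemma IsYD.adjointAction_smashEnd_tmul (hS : IsAntipodeInv k H Sinv)
    (h : IsYD k H Sinv α β act coact) (ρ : H →ₐ[k] Module.End k N) {x : H} {s : Finset ℕ}
    {p q : ℕ → H} (hpq : comul (R := k) x = ∑ i ∈ s, p i ⊗ₜ[k] q i) (u : Module.End k M)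
    (v : Module.End k N) :
    adjointAction (tensorActHom h.actHom (ρ.comp (relAut α β))) x
        (smashEnd h.isComodule ρ (u ⊗ₜ v)) =
      ∑ i ∈ s, smashEnd h.isComodule ρ
        (adjointAction h.actHom (p i) u ⊗ₜ adjointAction ρ (q i) v) := by
  have hu : Commute (convUnit ((Module.End.lTensorAlgHom k N M).comp (ρ.comp (relAut α β)))).val
      (convConst (rTensor N u)) := by
    ext x m n
    simp [convConst_mul_apply, mul_convConst_apply, -convMul_apply]
  have hv : Commute (convUnit ((Module.End.rTensorAlgHom k M N).comp h.actHom)).val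
      (convConst (lTensor M v)) := by
    ext x m n
    simp [convConst_mul_apply, mul_convConst_apply, -convMul_apply]
  have hconj := conj_mul_conj_eq_of_mul_eq _ _ _ _ (h.convMul_twistUnit hS ρ) hu hv
  rw [← convUnit_tensorActHom] at hconj
  simp only [← toConv_adjointAction, ← map_inv, Units.coe_map, ← map_mul] at hconj
  replace hconj := congr($hconj x)
  rw [mul_convConst_apply, convMul_apply_of_comul_eq _ _ hpq] at hconj
  simp only [mul_convConst_apply] at hconj
  have hr (y : H) : adjointAction ((Module.End.rTensorAlgHom k M N).comp h.actHom) y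
      (rTensor N u) = rTensor N (adjointAction h.actHom y u) := (map_adjointAction ..).symm
  have hl (y : H) : adjointAction ((Module.End.lTensorAlgHom k N M).comp ρ) y (lTensor M v) =
      lTensor M (adjointAction ρ y v) := (map_adjointAction ..).symm
  refine hconj.trans ?_
  simp [Finset.sum_mul, mul_assoc, hr, hl]

lemma TensorActChar.smashEnd_act (hS : IsAntipodeInv k H Sinv) (hM : IsYD k H Sinv α β act coact)
    (ρ : H →ₐ[k] Module.End k N)
    {actS : H →ₗ[k] Module.End k M ⊗[k] Module.End k N →ₗ[k] Module.End k M ⊗[k] Module.End k N}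
    (h : TensorActChar k H id id (adjointAction hM.actHom).toLinearMap
      (adjointAction ρ).toLinearMap actS) (x : H) (z : Module.End k M ⊗[k] Module.End k N) :
    smashEnd hM.isComodule ρ (actS x z) =
      adjointAction (tensorActHom hM.actHom (ρ.comp (relAut α β))) x
        (smashEnd hM.isComodule ρ z) := by
  obtain ⟨s, p, q, hpq⟩ := exists_nat_sum_tmul_eq (comul (R := k) x)
  induction z with
  | zero => simp only [map_zero]
  | add y z hy hz => simp only [map_add, hy, hz]
  | tmul u v =>
    rw [hM.adjointAction_smashEnd_tmul hS ρ hpq, h x u v s p q hpq, map_sum]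
    rfl

end ActionOnEnd

section CoactionOnEnd

variable {coactEM : Module.End k M →ₗ[k] Module.End k M ⊗[k] H}

lemma EndCoactChar.endTwist_coact (hS : IsAntipodeInv k H Sinv)
    (h : EndCoactChar k H Sinv coact coactEM) {Q : Type*} [AddCommGroup Q] [Module k Q]
    (f : Hᵐᵒᵖ →ₐ[k] Module.End k Q) (u : Module.End k M) :
    endTwist f (coactEM u) =
      coactTwist coact (opConvUnit hS.bijective f).val.ofConv * rTensor Q u *
        coactTwist coact (opConvUnit hS.bijective f)⁻¹.val.ofConv := by
  ext m q
  obtain ⟨t, m₀, m₁, hm⟩ := exists_nat_sum_tmul_eq (coact m)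
  choose r n₀ n₁ hn using fun j ↦ exists_nat_sum_tmul_eq (coact (u (m₀ j)))
  simp [endTwist_apply_tmul, h u m t m₀ m₁ r n₀ n₁ hm fun j _ ↦ hn j, opConvUnit,
    coactTwist_tmul, hm, hn, hS.ofBijective_symm_apply]

lemma EndCoactChar.coact_apply (hS : IsAntipodeInv k H Sinv) (hM : IsComodule coact)
    (h : EndCoactChar k H Sinv coact coactEM) {u : Module.End k M} {t : Finset ℕ}
    {e₀ : ℕ → Module.End k M} {e₁ : ℕ → H} (hu : coactEM u = ∑ j ∈ t, e₀ j ⊗ₜ[k] e₁ j) (m : M) :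
    coact (u m) = ∑ j ∈ t, TensorProduct.map (e₀ j) (mulRight k (e₁ j)) (coact m) := by
  have hcoact : _ = (hM.opTwistUnit hS.bijective (mulRightHom k H)).val * rTensor H u *
      (hM.opTwistUnit hS.bijective (mulRightHom k H))⁻¹.val :=
    h.endTwist_coact hS (mulRightHom k H) u
  rw [Units.eq_mul_inv_iff_mul_eq, hu] at hcoact
  have hid : ((mulRightHom k H).toLinearMap ∘ₗ (opLinearEquiv k).toLinearMap).flip 1 = .id := by
    ext; simp
  have hR (x : H) : mulRightHom k H (op x) = mulRight k x := rfl
  simpa [hid, hR, LinearMap.sum_apply] using congr($hcoact (m ⊗ₜ[k] (1 : H))).symm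

lemma EndCoactChar.smashEnd_mul (hS : IsAntipodeInv k H Sinv) (hM : IsComodule coact)
    (hE : EndCoactChar k H Sinv coact coactEM) (ρ : H →ₐ[k] Module.End k N)
    (u u' : Module.End k M) (v v' : Module.End k N) {t : Finset ℕ}
    {e₀ : ℕ → Module.End k M} {e₁ : ℕ → H} (hu' : coactEM u' = ∑ j ∈ t, e₀ j ⊗ₜ[k] e₁ j) :
    smashEnd hM ρ (∑ j ∈ t, (u * e₀ j) ⊗ₜ[k] (adjointAction ρ (e₁ j) v * v')) =
      smashEnd hM ρ (u ⊗ₜ v) * smashEnd hM ρ (u' ⊗ₜ v') := by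
  have hcomm : coactTwist coact ((adjointAction ρ).toLinearMap.flip v) * rTensor N u' =
      ∑ j ∈ t, rTensor N (e₀ j) *
        coactTwist coact ((adjointAction ρ).toLinearMap.flip (adjointAction ρ (e₁ j) v)) := by
    ext m n
    simp only [AlgebraTensorModule.curry_apply, restrictScalars_self, curry_apply,
      Module.End.mul_apply, rTensor_tmul, coactTwist_tmul, LinearMap.sum_apply,
      hE.coact_apply hS hM hu', map_sum]
    refine Finset.sum_congr rfl fun j _ ↦ ?_
    have hx : ((adjointAction ρ).toLinearMap.flip v).flip n ∘ₗ mulRight k (e₁ j) =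
        ((adjointAction ρ).toLinearMap.flip (adjointAction ρ (e₁ j) v)).flip n := by
      ext x
      simp
    rw [← comp_apply, ← comp_apply, ← comp_apply, lTensor_comp_map, hx, ← rTensor_comp_lTensor]
    rfl
  simp only [hM.coactTwist_adjointAction] at hcomm
  set W := hM.twistUnit ρ
  calc smashEnd hM ρ (∑ j ∈ t, (u * e₀ j) ⊗ₜ[k] (adjointAction ρ (e₁ j) v * v'))
      = rTensor N u * (∑ j ∈ t, rTensor N (e₀ j) *
          (W.val * lTensor M (adjointAction ρ (e₁ j) v) * W⁻¹.val)) *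
          (W.val * lTensor M v' * W⁻¹.val) := by
        simp [W, mul_assoc, Finset.sum_mul, Finset.mul_sum, lTensor_mul, rTensor_mul]
    _ = smashEnd hM ρ (u ⊗ₜ v) * smashEnd hM ρ (u' ⊗ₜ v') := by
        rw [← hcomm, smashEnd_tmul, smashEnd_tmul]
        simp only [mul_assoc, W]

variable {coactM : M →ₗ[k] M ⊗[k] H} {actN : H →ₗ[k] N →ₗ[k] N} {coactN : N →ₗ[k] N ⊗[k] H}
  {coactEN : Module.End k N →ₗ[k] Module.End k N ⊗[k] H}
  {coactT : M ⊗[k] N →ₗ[k] (M ⊗[k] N) ⊗[k] H}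
  {coactET : Module.End k (M ⊗[k] N) →ₗ[k] Module.End k (M ⊗[k] N) ⊗[k] H}
  {coactS : Module.End k M ⊗[k] Module.End k N →ₗ[k] (Module.End k M ⊗[k] Module.End k N) ⊗[k] H}

lemma TensorCoactChar.assocConj_coactTwist_of_map_mul_rev {Q : Type*} [AddCommGroup Q]
    [Module k Q] (h : TensorCoactChar k H coactM coactN coactT) {f : H →ₗ[k] Module.End k Q}
    (hf : ∀ x y, f (x * y) = f y * f x) :
    assocConj (coactTwist coactT f) =
      coactTwist coactM (lTensorHom N ∘ₗ f) * lTensor M (coactTwist coactN f) := by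
  ext m n q
  obtain ⟨s, m₀, m₁, hm⟩ := exists_nat_sum_tmul_eq (coactM m)
  obtain ⟨t, n₀, n₁, hn⟩ := exists_nat_sum_tmul_eq (coactN n)
  simp [assocConj, tmul_sum, coactTwist_tmul, h m n s t _ _ _ _ hm hn, hm, hn, hf,
    LinearEquiv.conjAlgEquiv_apply, Finset.sum_comm (s := s)]

lemma TensorCoactChar.assocConj_coactTwist_of_map_mul {Q : Type*} [AddCommGroup Q] [Module k Q]
    (h : TensorCoactChar k H coactM coactN coactT) {f : H →ₗ[k] Module.End k Q}
    (hf : ∀ x y, f (x * y) = f x * f y) :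
    assocConj (coactTwist coactT f) =
      lTensor M (coactTwist coactN f) * coactTwist coactM (lTensorHom N ∘ₗ f) := by
  ext m n q
  obtain ⟨s, m₀, m₁, hm⟩ := exists_nat_sum_tmul_eq (coactM m)
  obtain ⟨t, n₀, n₁, hn⟩ := exists_nat_sum_tmul_eq (coactN n)
  simp [assocConj, tmul_sum, coactTwist_tmul, h m n s t _ _ _ _ hm hn, hm, hn, hf,
    LinearEquiv.conjAlgEquiv_apply]

lemma TensorCoactChar.assocConj_endTwist_coact (hS : IsAntipodeInv k H Sinv)
    (hM : IsComodule coactM) (hN : IsComodule coactN)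
    (hT : TensorCoactChar k H coactM coactN coactT) (hET : EndCoactChar k H Sinv coactT coactET)
    (w : Module.End k (M ⊗[k] N)) :
    assocConj (endTwist (mulRightHom k H) (coactET w)) =
      (hM.opTwistUnit₁₃ hS.bijective N (mulRightHom k H) *
        hN.opTwistUnit₂₃ hS.bijective M (mulRightHom k H)).val * assocConj (rTensor H w) *
      (hM.opTwistUnit₁₃ hS.bijective N (mulRightHom k H) *
        hN.opTwistUnit₂₃ hS.bijective M (mulRightHom k H))⁻¹.val := by
  rw [hET.endTwist_coact hS, map_mul, map_mul,
    hT.assocConj_coactTwist_of_map_mul_rev fun x y ↦ map_mul (mulRightHom k H) (op y) (op x),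
    hT.assocConj_coactTwist_of_map_mul (opConvUnit_inv_mul hS.bijective (mulRightHom k H)),
    mul_inv_rev]
  rfl

lemma assocConj_map_smashEnd (hM : IsComodule coactM) (ρ : H →ₐ[k] Module.End k N)
    (u : Module.End k M) (v : Module.End k N) (a b : Module.End k H) :
    assocConj (TensorProduct.map (smashEnd hM ρ (u ⊗ₜ v)) (a * b)) =
      TensorProduct.map u (lTensor N a) * (hM.twistUnit₁₂ H ρ).val *
        lTensor M (TensorProduct.map v b) * (hM.twistUnit₁₂ H ρ)⁻¹.val := by
  have h : TensorProduct.map (smashEnd hM ρ (u ⊗ₜ v)) (a * b) =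
      TensorProduct.map (rTensor N u) a * rTensor H (hM.twistUnit ρ).val *
        TensorProduct.map (lTensor M v) b * rTensor H (hM.twistUnit ρ)⁻¹.val := by
    simp only [smashEnd_tmul, rTensor, ← TensorProduct.map_mul, mul_assoc]
    rfl
  have hu : assocConj (TensorProduct.map (rTensor N u) a) = TensorProduct.map u (lTensor N a) :=
    assocConj_map_map u .id a
  have hv : assocConj (TensorProduct.map (lTensor M v) b) = lTensor M (TensorProduct.map v b) :=
    assocConj_map_map .id v b
  have hW := assocConj_rTensor_coactTwist (P := H) coactM ρ.toLinearMap
  have hWinv := assocConj_rTensor_coactTwist (P := H) coactM (ρ.toLinearMap ∘ₗ antipode k)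
  rw [h, map_mul, map_mul, map_mul]
  exact congr($hu * $hW * $hv * $hWinv)

lemma IsYD.opTwistUnit_mul_twistUnit (hS : IsAntipodeInv k H Sinv) (hM : IsComodule coactM)
    (hN : IsYD k H Sinv α β actN coactN) :
    (hM.opTwistUnit₁₃ hS.bijective N (mulRightHom k H)).val *
        (hN.isComodule.opTwistUnit₂₃ hS.bijective M (mulRightHom k H)).val *
        (hM.twistUnit₁₂ H hN.actHom).val =
      (hM.twistUnit₁₂ H hN.actHom).val *
        (hN.isComodule.opTwistUnit₂₃ hS.bijective M (mulRightHom k H)).val *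
        (hM.opTwistUnit₁₃ hS.bijective N
          ((mulRightHom k H).comp (AlgHom.op (relAut α β)))).val := by
  have h := congr(coactTwistHom hM (N ⊗[k] H) $(hN.convMul_eq hS))
  have hconst : coactTwistHom hM (N ⊗[k] H) (convConst
      (hN.isComodule.opTwistUnit hS.bijective (mulRightHom k H)).val) = lTensor M _ :=
    coactTwist_convConst hM _
  simp only [map_mul, hconst] at h
  exact h

lemma TensorCoactChar.assocConj_endTwist_smashEnd (hM : IsComodule coactM)
    (ρ : H →ₐ[k] Module.End k N) (h : TensorCoactChar k H coactEM coactEN coactS)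
    (u : Module.End k M) (v : Module.End k N) :
    assocConj (endTwist (mulRightHom k H) (rTensor H (smashEnd hM ρ) (coactS (u ⊗ₜ v)))) =
      endTwist ((Module.End.lTensorAlgHom k H N).comp (mulRightHom k H)) (coactEM u) *
        (hM.twistUnit₁₂ H ρ).val * lTensor M (endTwist (mulRightHom k H) (coactEN v)) *
        (hM.twistUnit₁₂ H ρ)⁻¹.val := by
  obtain ⟨s, u₀, u₁, hu⟩ := exists_nat_sum_tmul_eq (coactEM u)
  obtain ⟨t, v₀, v₁, hv⟩ := exists_nat_sum_tmul_eq (coactEN v)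
  simp only [h u v s t _ _ _ _ hu hv, hu, hv, map_sum, rTensor_tmul, endTwist_tmul,
    AlgHom.comp_apply, lTensorAlgHom_eq_lTensor, op_mul, map_mul, assocConj_map_smashEnd]
  simp only [Finset.sum_mul, Finset.mul_sum, ← coe_lTensorHom, map_sum]
  exact Finset.sum_comm

lemma TensorCoactChar.coact_smashEnd [FiniteDimensional k M] [FiniteDimensional k N]
    (h : TensorCoactChar k H coactEM coactEN coactS) (hS : IsAntipodeInv k H Sinv)
    (hM : IsComodule coactM) (hN : IsYD k H Sinv α β actN coactN)
    (hEM : EndCoactChar k H Sinv coactM coactEM) (hEN : EndCoactChar k H Sinv coactN coactEN)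
    (hT : TensorCoactChar k H coactM coactN coactT) (hET : EndCoactChar k H Sinv coactT coactET)
    (x : Module.End k M ⊗[k] Module.End k N) :
    coactET (smashEnd hM hN.actHom x) = rTensor H (smashEnd hM hN.actHom) (coactS x) := by
  induction x with
  | zero => simp
  | add x y hx hy => simp only [map_add, hx, hy]
  | tmul u v =>
    apply endTwist_mulRightHom_injective
    apply assocConj.injective
    have hu : Commute (hN.isComodule.opTwistUnit₂₃ hS.bijective M (mulRightHom k H)).val
        (rTensor (N ⊗[k] H) u) := commute_lTensor_rTensor ..
    have hv : Commute (hM.opTwistUnit₁₃ hS.bijective N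
        ((mulRightHom k H).comp (AlgHom.op (relAut α β)))).val (lTensor M (rTensor H v)) :=
      hM.commute_opTwistUnit_lTensor hS.bijective fun _ ↦ commute_lTensor_rTensor ..
    have hconj := conj_mul_conj_eq_of_mul_eq _ _ _ _ (hN.opTwistUnit_mul_twistUnit hS hM) hu hv
    have hφ : assocConj (rTensor H (smashEnd hM hN.actHom (u ⊗ₜ v))) = rTensor (N ⊗[k] H) u *
        ((hM.twistUnit₁₂ H hN.actHom).val * lTensor M (rTensor H v) *
          (hM.twistUnit₁₂ H hN.actHom)⁻¹.val) := by
      have := assocConj_map_smashEnd hM hN.actHom u v (1 : Module.End k H) 1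
      rwa [mul_one, Module.End.one_eq_id, lTensor_id, mul_assoc, mul_assoc,
        ← mul_assoc (Units.val _)] at this
    rw [hT.assocConj_endTwist_coact hS hM hN.isComodule hET, h.assocConj_endTwist_smashEnd,
      hEM.endTwist_coact hS, hEN.endTwist_coact hS, hφ, lTensor_mul, lTensor_mul]
    exact hconj

end CoactionOnEnd

end YetterDrinfeld

end GYD

theorem statement_16
    (k H : Type) [Field k] [Ring H] [HopfAlgebra k H]
    (Sinv : H → H) (hS : GYD.IsAntipodeInv k H Sinv)
    (α β γ δ : H ≃ₗ[k] H)
    (hα : GYD.IsHopfAut k H α) (hβ : GYD.IsHopfAut k H β)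
    (hγ : GYD.IsHopfAut k H γ) (hδ : GYD.IsHopfAut k H δ)
    (M N : Type) [AddCommGroup M] [Module k M] [AddCommGroup N] [Module k N]
    [FiniteDimensional k M] [FiniteDimensional k N]
    (actM : H →ₗ[k] M →ₗ[k] M) (coactM : M →ₗ[k] M ⊗[k] H)
    (actN : H →ₗ[k] N →ₗ[k] N) (coactN : N →ₗ[k] N ⊗[k] H)
    (hM : GYD.IsYD k H Sinv ⇑α ⇑β actM coactM)
    (hN : GYD.IsYD k H Sinv ⇑γ ⇑δ actN coactN)
    -- End(M)
    (actEM : H →ₗ[k] Module.End k M →ₗ[k] Module.End k M)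
    (coactEM : Module.End k M →ₗ[k] Module.End k M ⊗[k] H)
    (hactEM : GYD.EndActChar k H ⇑α.symm actM actEM)
    (hcoactEM : GYD.EndCoactChar k H Sinv coactM coactEM)
    -- End(N)
    (actEN : H →ₗ[k] Module.End k N →ₗ[k] Module.End k N)
    (coactEN : Module.End k N →ₗ[k] Module.End k N ⊗[k] H)
    (hactEN : GYD.EndActChar k H ⇑γ.symm actN actEN)
    (hcoactEN : GYD.EndCoactChar k H Sinv coactN coactEN)
    -- M ⊗̂ N, an (αγ, δγ⁻¹βγ)-Yetter-Drinfeld module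
    (actT : H →ₗ[k] (M ⊗[k] N) →ₗ[k] (M ⊗[k] N))
    (coactT : M ⊗[k] N →ₗ[k] (M ⊗[k] N) ⊗[k] H)
    (hactT : GYD.TensorActChar k H ⇑γ (fun h => γ.symm (β (γ h))) actM actN actT)
    (hcoactT : GYD.TensorCoactChar k H coactM coactN coactT)
    -- End(M ⊗̂ N)
    (actET : H →ₗ[k] Module.End k (M ⊗[k] N) →ₗ[k] Module.End k (M ⊗[k] N))
    (coactET : Module.End k (M ⊗[k] N) →ₗ[k] Module.End k (M ⊗[k] N) ⊗[k] H)
    (hactET : GYD.EndActChar k H (fun h => γ.symm (α.symm h)) actT actET)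
    (hcoactET : GYD.EndCoactChar k H Sinv coactT coactET)
    -- the Yetter-Drinfeld structures of the smash product End(M) # End(N)
    (actS : H →ₗ[k] (Module.End k M ⊗[k] Module.End k N)
        →ₗ[k] (Module.End k M ⊗[k] Module.End k N))
    (coactS : Module.End k M ⊗[k] Module.End k N
        →ₗ[k] (Module.End k M ⊗[k] Module.End k N) ⊗[k] H)
    (hactS : GYD.TensorActChar k H id id actEM actEN actS)
    (hcoactS : GYD.TensorCoactChar k H coactEM coactEN coactS)
    -- the map φ(u # v)(m ⊗ n) = u(m₍₀₎) ⊗ (m₍₁₎ · v)(n)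
    (φ : Module.End k M ⊗[k] Module.End k N →ₗ[k] Module.End k (M ⊗[k] N))
    (hφ : ∀ (u : Module.End k M) (v : Module.End k N) (m : M) (n : N)
        (t : Finset ℕ) (m₀ : ℕ → M) (m₁ : ℕ → H),
        coactM m = ∑ j ∈ t, m₀ j ⊗ₜ[k] m₁ j →
        φ (u ⊗ₜ[k] v) (m ⊗ₜ[k] n) = ∑ j ∈ t, u (m₀ j) ⊗ₜ[k] (actEN (m₁ j) v) n) :
    Function.Bijective φ ∧
    -- φ is an algebra map from the smash product End(M) # End(N) to End(M ⊗̂ N)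
    φ ((1 : Module.End k M) ⊗ₜ[k] (1 : Module.End k N)) = 1 ∧
    (∀ (u u' : Module.End k M) (v v' : Module.End k N) (t : Finset ℕ)
        (e₀ : ℕ → Module.End k M) (e₁ : ℕ → H),
        coactEM u' = ∑ j ∈ t, e₀ j ⊗ₜ[k] e₁ j →
        φ (∑ j ∈ t, (u * e₀ j) ⊗ₜ[k] (actEN (e₁ j) v * v'))
          = φ (u ⊗ₜ[k] v) * φ (u' ⊗ₜ[k] v')) ∧
    -- φ is H-linear and H-colinear
    (∀ (h : H) (x : Module.End k M ⊗[k] Module.End k N), φ (actS h x) = actET h (φ x)) ∧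
    (∀ x : Module.End k M ⊗[k] Module.End k N,
        coactET (φ x) = LinearMap.rTensor H φ (coactS x)) := by
  obtain ⟨α, rfl⟩ := hα.exists_bialgEquiv
  obtain ⟨β, rfl⟩ := hβ.exists_bialgEquiv
  obtain ⟨γ, rfl⟩ := hγ.exists_bialgEquiv
  obtain ⟨δ, rfl⟩ := hδ.exists_bialgEquiv
  replace hM : GYD.IsYD k H Sinv α β actM coactM := hM
  replace hN : GYD.IsYD k H Sinv γ δ actN coactN := hN
  obtain rfl := hactEM.apply_eq_adjointAction (ρ := hM.actHom) fun _ ↦ rfl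
  obtain rfl := hactEN.apply_eq_adjointAction (ρ := hN.actHom) fun _ ↦ rfl
  obtain rfl := hactET.apply_eq_adjointAction
    (GYD.TensorActChar.tensorActHom_apply hactT hM hN)
  obtain rfl := GYD.eq_smashEnd hM.isComodule hN.actHom hφ
  exact ⟨GYD.smashEnd_bijective hM.isComodule hS.bijective hN.actHom,
    GYD.smashEnd_one_tmul_one hM.isComodule hN.actHom,
    fun u u' v v' _ _ _ hu' ↦ hcoactEM.smashEnd_mul hS hM.isComodule hN.actHom u u' v v' hu',
    hactS.smashEnd_act hS hM hN.actHom,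
    hcoactS.coact_smashEnd hS hM.isComodule hN hcoactEM hcoactEN hcoactT hcoactET⟩

end
end
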